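/- arXiv:1305.0744 — 6 statements merged into one kernel-verified Lean document; each statement's English description precedes it below -/
import Mathlib

section
/- Let R be an associative ring, G a group, and A an RG-module. If K and L are subgroups of G such that A/C_A(K) and A/C_A(L) are both minimax R-modules, then A/C_A(⟨K, L⟩) is also a minimax R-module. -/
/-- `C_A(H)`: the `R`-submodule of `A` consisting of the elements fixed by every
element of the subgroup `H` of `G`. -/
def moduleCentralizer (R : Type*) [Ring R] {G : Type*} [Group G] (A : Type*)
    [AddCommGroup A] [Module R A] [DistribMulAction G A] [SMulCommClass G R A]
    (H : Subgroup G) : Submodule R A where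
  carrier := {a | ∀ g ∈ H, g • a = a}
  add_mem' := fun {a b} ha hb g hg => by rw [smul_add, ha g hg, hb g hg]
  zero_mem' := fun g _ => smul_zero g
  smul_mem' := fun r a ha g hg => by rw [smul_comm, ha g hg]

/-- An `R`-module is minimax if it has a finite series of submodules each of whose
factors is either a Noetherian `R`-module or an Artinian `R`-module. -/
def Module.IsMinimax (R M : Type*) [Ring R] [AddCommGroup M] [Module R M] : Prop :=
  ∃ (n : ℕ) (f : Fin (n + 1) → Submodule R M),
    Monotone f ∧ f 0 = ⊥ ∧ f (Fin.last n) = ⊤ ∧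
    ∀ i : Fin n,
      IsNoetherian R (↥(f i.succ) ⧸ Submodule.comap (f i.succ).subtype (f i.castSucc)) ∨
      IsArtinian R (↥(f i.succ) ⧸ Submodule.comap (f i.succ).subtype (f i.castSucc))

def mmStep {R M : Type*} [Ring R] [AddCommGroup M] [Module R M] (X Y : Submodule R M) : Prop :=
  X ≤ Y ∧ (IsNoetherian R (↥Y ⧸ Submodule.comap Y.subtype X) ∨
      IsArtinian R (↥Y ⧸ Submodule.comap Y.subtype X))

theorem mmStep_pull {R M M' : Type*} [Ring R] [AddCommGroup M] [Module R M]
    [AddCommGroup M'] [Module R M'] (φ : M →ₗ[R] M') (X Y : Submodule R M)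
    (X' Y' : Submodule R M') (hY : ∀ y ∈ Y, φ y ∈ Y') (hX : X = Y ⊓ X'.comap φ)
    (h : mmStep X' Y') : mmStep X Y := by
  refine ⟨hX ▸ inf_le_left, ?_⟩
  let g : Y →ₗ[R] (↥Y' ⧸ Submodule.comap Y'.subtype X') :=
    (Submodule.mkQ _).comp (φ.restrict hY)
  have hk : LinearMap.ker g = Submodule.comap Y.subtype X := by
    ext y
    simp [g, hX, LinearMap.restrict_apply]
  have hi : Function.Injective ((Submodule.comap Y.subtype X).liftQ g hk.ge) :=
    LinearMap.ker_eq_bot.1 (Submodule.ker_liftQ_eq_bot _ _ _ hk.le)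
  rcases h.2 with h | h
  · exact Or.inl (isNoetherian_of_injective _ hi)
  · exact Or.inr (isArtinian_of_injective _ hi)

theorem mmStep_map {R M M' : Type*} [Ring R] [AddCommGroup M] [Module R M]
    [AddCommGroup M'] [Module R M'] (φ : M →ₗ[R] M') (X Y : Submodule R M)
    (h : mmStep X Y) : mmStep (X.map φ) (Y.map φ) := by
  refine ⟨Submodule.map_mono h.1, ?_⟩
  let r : Y →ₗ[R] Y.map φ := φ.restrict (fun y hy => Submodule.mem_map_of_mem hy)
  have hr : Function.Surjective r := by
    rintro ⟨_, y, hy, rfl⟩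
    exact ⟨⟨y, hy⟩, rfl⟩
  let g := (Submodule.comap Y.subtype X).mapQ (Submodule.comap (Y.map φ).subtype (X.map φ)) r
    (fun y hy => Submodule.mem_map_of_mem (f := φ) (p := X) hy)
  have hg : Function.Surjective g := by
    intro z
    obtain ⟨z, rfl⟩ := Submodule.mkQ_surjective _ z
    obtain ⟨y, rfl⟩ := hr z
    exact ⟨Submodule.mkQ _ y, rfl⟩
  rcases h.2 with h | h
  · exact Or.inl (isNoetherian_of_surjective (f := g) (LinearMap.range_eq_top.2 hg))
  · exact Or.inr (isArtinian_of_surjective _ g hg)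

theorem mm_iff {R M : Type*} [Ring R] [AddCommGroup M] [Module R M] :
    Module.IsMinimax R M ↔ Relation.ReflTransGen mmStep (⊥ : Submodule R M) ⊤ := by
  constructor
  · rintro ⟨n, f, hm, h0, h1, hs⟩
    rw [← h0, ← h1]
    have : ∀ i : Fin (n + 1), Relation.ReflTransGen mmStep (f 0) (f i) := by
      intro i
      induction i using Fin.induction with
      | zero => exact .refl
      | succ i ih => exact ih.tail ⟨hm (Fin.castSucc_lt_succ).le, hs i⟩
    exact this _
  · intro h
    suffices H : ∀ a : Submodule R M, Relation.ReflTransGen mmStep a ⊤ →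
        ∃ (n : ℕ) (f : Fin (n + 1) → Submodule R M), f 0 = a ∧ f (Fin.last n) = ⊤ ∧
          ∀ i : Fin n, mmStep (f i.castSucc) (f i.succ) by
      obtain ⟨n, f, h0, h1, hs⟩ := H _ h
      exact ⟨n, f, Fin.monotone_iff_le_succ.2 fun i => (hs i).1, h0, h1, fun i => (hs i).2⟩
    intro a ha
    induction ha using Relation.ReflTransGen.head_induction_on with
    | refl => exact ⟨0, fun _ => ⊤, rfl, rfl, fun i => i.elim0⟩
    | @head a b hab _ ih =>
      obtain ⟨n, f, h0, h1, hs⟩ := ih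
      refine ⟨n + 1, Fin.cons a f, rfl, h1, fun i => ?_⟩
      refine Fin.cases ?_ (fun j => hs j) i
      change mmStep a (f 0)
      rwa [h0]

theorem mm_quot_iff {R M : Type*} [Ring R] [AddCommGroup M] [Module R M] (N : Submodule R M) :
    Module.IsMinimax R (M ⧸ N) ↔ Relation.ReflTransGen mmStep N ⊤ := by
  rw [mm_iff]
  constructor
  · intro h
    have := h.lift (p := mmStep) (Submodule.comap N.mkQ) (fun X Y hXY =>
      mmStep_pull N.mkQ _ _ X Y (fun y hy => hy)
        (inf_eq_right.2 (Submodule.comap_mono hXY.1)).symm hXY)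
    simpa [Function.onFun] using this
  · intro h
    have := h.lift (p := mmStep) (Submodule.map N.mkQ) (fun X Y hXY => mmStep_map N.mkQ _ _ hXY)
    simpa [Function.onFun] using this

/-- If `A/C_A(K)` and `A/C_A(L)` are minimax `R`-modules, then so is `A/C_A(⟨K, L⟩)`. -/
theorem minimax_quotient_centralizer_sup (R : Type*) [Ring R] (G : Type*) [Group G]
    (A : Type*) [AddCommGroup A] [Module R A] [DistribMulAction G A] [SMulCommClass G R A]
    (K L : Subgroup G)
    (hK : Module.IsMinimax R (A ⧸ moduleCentralizer R A K))
    (hL : Module.IsMinimax R (A ⧸ moduleCentralizer R A L)) :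
    Module.IsMinimax R (A ⧸ moduleCentralizer R A (K ⊔ L)) := by
  have e : moduleCentralizer R A (K ⊔ L) = moduleCentralizer R A K ⊓ moduleCentralizer R A L := by
    ext a
    constructor
    · intro h
      exact ⟨fun g hg => h g (le_sup_left (a := K) hg), fun g hg => h g (le_sup_right (a := K) hg)⟩
    · rintro ⟨h1, h2⟩
      have : K ⊔ L ≤ MulAction.stabilizer G a := sup_le h1 h2
      exact fun g hg => this hg
  rw [mm_quot_iff] at *
  rw [e]
  have := hL.lift (p := mmStep) (fun X => moduleCentralizer R A K ⊓ X) (fun X Y hXY =>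
      mmStep_pull LinearMap.id _ _ X Y (fun y hy => hy.2)
        (by rw [Submodule.comap_id, inf_assoc, inf_eq_right.2 hXY.1]) hXY)
  simp only [Function.onFun, inf_top_eq] at this
  exact this.trans hK
end

section
/- Let R be an associative ring, G an infinite group with G ≠ G' (G is not equal to its derived subgroup), and A an RG-module. If A/C_A(G) is not a minimax R-module but A/C_A(H) is a minimax R-module for every proper subgroup H of G, then G has no proper subgroups of finite index and G/G' is isomorphic to a quasi-cyclic q-group C_{q^∞} for some prime q. -/
/-- The quasi-cyclic (Prüfer) `q`-group `C_{q^∞}`: the `q`-primary component of `ℚ/ℤ`. -/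
def PruferGroup (q : ℕ) (hq : q.Prime) :
    AddSubgroup (ℚ ⧸ AddSubgroup.zmultiples (1 : ℚ)) :=
  haveI : Fact q.Prime := ⟨hq⟩
  AddCommGroup.primaryComponent (ℚ ⧸ AddSubgroup.zmultiples (1 : ℚ)) q

section MinimaxAux

def MMStep (R : Type*) {M : Type*} [Ring R] [AddCommGroup M] [Module R M]
    (X Y : Submodule R M) : Prop :=
  X ≤ Y ∧ (IsNoetherian R (↥Y ⧸ Submodule.comap Y.subtype X) ∨
    IsArtinian R (↥Y ⧸ Submodule.comap Y.subtype X))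

theorem MMStep.pull {R M N : Type*} [Ring R] [AddCommGroup M] [Module R M]
    [AddCommGroup N] [Module R N] (f : M →ₗ[R] N) {X Y : Submodule R N}
    (h : MMStep R X Y) (S : Submodule R M) :
    MMStep R (S ⊓ X.comap f) (S ⊓ Y.comap f) := by
  obtain ⟨hle, h⟩ := h
  refine ⟨inf_le_inf_left _ (Submodule.comap_mono hle), ?_⟩
  let g : ↥(S ⊓ Y.comap f) →ₗ[R] ↥Y :=
    (f.comp (S ⊓ Y.comap f).subtype).codRestrict Y (fun x => x.2.2)
  let F : (↥(S ⊓ Y.comap f) ⧸ Submodule.comap (S ⊓ Y.comap f).subtype (S ⊓ X.comap f)) →ₗ[R]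
      (↥Y ⧸ Submodule.comap Y.subtype X) :=
    Submodule.mapQ _ _ g (fun x hx => hx.2)
  have hF : Function.Injective F := by
    rw [← LinearMap.ker_eq_bot, LinearMap.ker_eq_bot']
    intro m hm
    obtain ⟨x, rfl⟩ := Submodule.Quotient.mk_surjective _ m
    replace hm : (Submodule.Quotient.mk (g x) : ↥Y ⧸ Submodule.comap Y.subtype X) = 0 := hm
    rw [Submodule.Quotient.mk_eq_zero] at hm
    rw [Submodule.Quotient.mk_eq_zero]
    exact ⟨x.2.1, hm⟩
  rcases h with h | h
  · exact Or.inl (isNoetherian_of_injective F hF)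
  · exact Or.inr (isArtinian_of_injective F hF)

theorem MMStep.chain_pull {R M N : Type*} [Ring R] [AddCommGroup M] [Module R M]
    [AddCommGroup N] [Module R N] (f : M →ₗ[R] N) {X Y : Submodule R N}
    (h : Relation.ReflTransGen (MMStep R) X Y) (S : Submodule R M) :
    Relation.ReflTransGen (MMStep R) (S ⊓ X.comap f) (S ⊓ Y.comap f) :=
  Relation.ReflTransGen.lift (r := MMStep R) (p := MMStep R)
    (fun X : Submodule R N => S ⊓ X.comap f) (fun _ _ h => MMStep.pull f h S) X Y h

theorem isMinimax_iff (R M : Type*) [Ring R] [AddCommGroup M] [Module R M] :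
    Module.IsMinimax R M ↔ Relation.ReflTransGen (MMStep R) (⊥ : Submodule R M) ⊤ := by
  constructor
  · rintro ⟨n, f, hm, h0, h1, hs⟩
    rw [← h0, ← h1]
    generalize Fin.last n = i
    induction i using Fin.induction with
    | zero => exact .refl
    | succ i ih => exact ih.tail ⟨hm i.castSucc_le_succ, hs i⟩
  · intro h
    have key : ∀ Y, Relation.ReflTransGen (MMStep R) (⊥ : Submodule R M) Y →
        ∃ (n : ℕ) (f : ℕ → Submodule R M), f 0 = ⊥ ∧ f n = Y ∧
          ∀ i < n, MMStep R (f i) (f (i+1)) := by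
      intro Y hY
      induction hY with
      | refl => exact ⟨0, fun _ => ⊥, rfl, rfl, by simp⟩
      | @tail b c _ hbc ih =>
        obtain ⟨n, f, h0, hn, hs⟩ := ih
        refine ⟨n+1, fun i => if i ≤ n then f i else c, by simp [h0], by simp, ?_⟩
        intro i hi
        rcases Nat.lt_or_eq_of_le (Nat.lt_succ_iff.mp hi) with hlt | rfl
        · have h1 : i ≤ n := hlt.le
          have h2 : i + 1 ≤ n := hlt
          simp only [h1, h2, if_true]
          exact hs i hlt
        · simpa [hn] using hbc
    obtain ⟨n, f, h0, hn, hs⟩ := key _ h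
    refine ⟨n, fun i => f i, ?_, by simpa using h0, by simpa using hn, ?_⟩
    · rw [Fin.monotone_iff_le_succ]
      intro i
      exact (hs i i.2).1
    · intro i
      exact (hs i i.2).2

theorem isMinimax_inf {R A : Type*} [Ring R] [AddCommGroup A] [Module R A]
    (C D : Submodule R A) (hC : Module.IsMinimax R (A ⧸ C)) (hD : Module.IsMinimax R (A ⧸ D)) :
    Module.IsMinimax R (A ⧸ (C ⊓ D)) := by
  rw [isMinimax_iff] at *
  let f : (A ⧸ (C ⊓ D)) →ₗ[R] A ⧸ C := Submodule.factor inf_le_left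
  let g : (A ⧸ (C ⊓ D)) →ₗ[R] A ⧸ D := Submodule.factor inf_le_right
  have h1 := MMStep.chain_pull f hC ⊤
  have h2 := MMStep.chain_pull g hD (Submodule.comap f ⊥)
  have hb : Submodule.comap f ⊥ ⊓ Submodule.comap g ⊥ = ⊥ := by
    rw [eq_bot_iff]
    rintro m ⟨ha, hb⟩
    obtain ⟨x, rfl⟩ := Submodule.Quotient.mk_surjective _ m
    have ha' : (Submodule.Quotient.mk x : A ⧸ C) = 0 := ha
    have hb' : (Submodule.Quotient.mk x : A ⧸ D) = 0 := hb
    rw [Submodule.Quotient.mk_eq_zero] at ha' hb'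
    exact (Submodule.Quotient.mk_eq_zero _).2 ⟨ha', hb'⟩
  rw [hb] at h2
  simp only [Submodule.comap_top, inf_top_eq, top_inf_eq] at h1 h2
  exact h2.trans h1

theorem moduleCentralizer_sup (R : Type*) [Ring R] {G : Type*} [Group G] (A : Type*)
    [AddCommGroup A] [Module R A] [DistribMulAction G A] [SMulCommClass G R A]
    (H K : Subgroup G) : moduleCentralizer R A (H ⊔ K) =
      moduleCentralizer R A H ⊓ moduleCentralizer R A K := by
  ext a
  constructor
  · intro h
    exact ⟨fun g hg => h g (le_sup_left (a := H) hg), fun g hg => h g (le_sup_right (a := H) hg)⟩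
  · rintro ⟨h1, h2⟩ g hg
    have : H ⊔ K ≤ MulAction.stabilizer G a := sup_le h1 h2
    exact this hg

end MinimaxAux

section GroupAux

theorem zpowers_ne_top_of_join {G : Type*} [Group G] [Infinite G]
    (J : ∀ H K : Subgroup G, H ⊔ K = ⊤ → H = ⊤ ∨ K = ⊤) (g : G) :
    Subgroup.zpowers g ≠ ⊤ := by
  intro hg
  have hfin : ¬ IsOfFinOrder g := by
    intro h
    have h2 : Finite (Subgroup.zpowers g) := h.finite_zpowers
    rw [hg] at h2
    have : Finite G := Finite.of_equiv _ Subgroup.topEquiv.toEquiv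
    exact not_finite G
  have hinj := injective_zpow_iff_not_isOfFinOrder.mpr hfin
  have htop : Subgroup.zpowers (g ^ (2:ℤ)) ⊔ Subgroup.zpowers (g ^ (3:ℤ)) = ⊤ := by
    rw [eq_top_iff, ← hg, Subgroup.zpowers_le]
    have h : g = (g ^ (2:ℤ))⁻¹ * g ^ (3:ℤ) := by group
    rw [h]
    exact Subgroup.mul_mem_sup (inv_mem (by simpa only [← h] using Subgroup.mem_zpowers _))
      (by simpa only [← h] using Subgroup.mem_zpowers _)
  have key : ∀ n : ℤ, (∀ k : ℤ, n * k ≠ 1) → Subgroup.zpowers (g ^ n) ≠ ⊤ := by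
    intro n hn h
    have : g ∈ Subgroup.zpowers (g ^ n) := h ▸ Subgroup.mem_top g
    obtain ⟨k, hk⟩ := this
    simp only [← zpow_mul] at hk
    exact hn k (hinj (by simpa using hk))
  rcases J _ _ htop with h | h
  · exact key 2 (by omega) h
  · exact key 3 (by omega) h

theorem finiteIndex_eq_top_of_join {G : Type*} [Group G] [Infinite G]
    (J : ∀ H K : Subgroup G, H ⊔ K = ⊤ → H = ⊤ ∨ K = ⊤) (H : Subgroup G) (hH : H.FiniteIndex) :
    H = ⊤ := by
  by_contra hne
  have key : ∀ s : Set G, s.Finite → Subgroup.closure s ≠ ⊤ := by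
    intro s hs
    induction s, hs using Set.Finite.induction_on with
    | empty =>
      rw [Subgroup.closure_empty]
      have : Nontrivial G := inferInstance
      exact bot_ne_top
    | @insert a s _ _ ih =>
      rw [Set.insert_eq, Subgroup.closure_union, ← Subgroup.zpowers_eq_closure]
      intro h
      rcases J _ _ h with h | h
      · exact zpowers_ne_top_of_join J a h
      · exact ih h
  have hfin : Finite (G ⧸ H) := inferInstance
  have hs : (Set.range (Quotient.out : G ⧸ H → G)).Finite := Set.finite_range _
  have : H ⊔ Subgroup.closure (Set.range (Quotient.out : G ⧸ H → G)) = ⊤ := by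
    rw [eq_top_iff]
    intro g _
    obtain ⟨h, hh⟩ := QuotientGroup.mk_out_eq_mul H g
    have : g = (QuotientGroup.mk g : G ⧸ H).out * (h : G)⁻¹ := by rw [hh]; group
    rw [this]
    refine mul_mem ?_ ?_
    · exact (le_sup_right (a := H)) (Subgroup.subset_closure ⟨_, rfl⟩)
    · exact (le_sup_left (a := H)) (inv_mem h.2)
  rcases J _ _ this with h | h
  · exact hne h
  · exact key _ hs h

def JoinProp (Q : Type*) [AddCommGroup Q] : Prop :=
  ∀ H K : AddSubgroup Q, H ⊔ K = ⊤ → H = ⊤ ∨ K = ⊤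

def PDiv (Q : Type*) [AddCommGroup Q] : Prop :=
  ∀ p : ℕ, p.Prime → ∀ x : Q, ∃ y : Q, p • y = x

theorem exists_zmod_hom {V : Type*} [AddCommGroup V] (p : ℕ) (hp : p.Prime)
    (h : ∀ v : V, p • v = 0) {x : V} (hx : x ≠ 0) : ∃ f : V →+ ZMod p, f x ≠ 0 := by
  have : Fact p.Prime := ⟨hp⟩
  have key : ∀ [Module (ZMod p) V], ∃ f : V →+ ZMod p, f x ≠ 0 := by
    intro _
    obtain ⟨f, hf⟩ := Module.Projective.exists_dual_ne_zero (ZMod p) (V := V) (x := x) hx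
    exact ⟨f.toAddMonoidHom, hf⟩
  exact @key (AddCommGroup.zmodModule h)

theorem pdiv_of_finiteIndex (Q : Type*) [AddCommGroup Q]
    (h : ∀ H : AddSubgroup Q, H.FiniteIndex → H = ⊤) : PDiv Q := by
  intro p hp x
  have : Fact p.Prime := ⟨hp⟩
  let P : AddSubgroup Q := (nsmulAddMonoidHom p : Q →+ Q).range
  by_contra hx
  have hxP : x ∉ P := fun ⟨y, hy⟩ => hx ⟨y, hy⟩
  have htor : ∀ m : Q ⧸ P, p • m = 0 := by
    intro m
    obtain ⟨y, rfl⟩ := QuotientAddGroup.mk_surjective m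
    rw [← QuotientAddGroup.mk_nsmul, QuotientAddGroup.eq_zero_iff]
    exact ⟨y, rfl⟩
  have hne : (QuotientAddGroup.mk x : Q ⧸ P) ≠ 0 := by
    rwa [Ne, QuotientAddGroup.eq_zero_iff]
  obtain ⟨f, hf⟩ := exists_zmod_hom p hp htor hne
  let F : Q →+ ZMod p := f.comp (QuotientAddGroup.mk' P)
  have : NeZero p := ⟨hp.ne_zero⟩
  have hk := h F.ker (inferInstance)
  have : x ∈ F.ker := hk ▸ AddSubgroup.mem_top x
  exact hf this

theorem JoinProp.of_surj {Q M : Type*} [AddCommGroup Q] [AddCommGroup M] (hQ : JoinProp Q)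
    (f : Q →+ M) (hf : Function.Surjective f) : JoinProp M := by
  intro H K hHK
  have h : H.comap f ⊔ K.comap f = ⊤ := by
    rw [AddSubgroup.comap_sup_eq f H K hf, hHK, AddSubgroup.comap_top]
  have inj := AddSubgroup.comap_injective hf
  rcases hQ _ _ h with h | h
  · exact Or.inl (inj (by rw [h, AddSubgroup.comap_top]))
  · exact Or.inr (inj (by rw [h, AddSubgroup.comap_top]))

theorem PDiv.of_surj {Q M : Type*} [AddCommGroup Q] [AddCommGroup M] (hQ : PDiv Q)
    (f : Q →+ M) (hf : Function.Surjective f) : PDiv M := by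
  intro p hp x
  obtain ⟨x, rfl⟩ := hf x
  obtain ⟨y, rfl⟩ := hQ p hp x
  exact ⟨f y, by simp⟩

/-- torsion of `ℚ/ℤ` -/
theorem qz_exists (t : ℚ ⧸ AddSubgroup.zmultiples (1 : ℚ)) (N : ℕ) (hN : N ≠ 0)
    (h : N • t = 0) : ∃ a : ℤ, t = QuotientAddGroup.mk ((a : ℚ) / N) := by
  obtain ⟨r, rfl⟩ := QuotientAddGroup.mk_surjective t
  rw [← QuotientAddGroup.mk_nsmul, QuotientAddGroup.eq_zero_iff] at h
  obtain ⟨a, ha⟩ := h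
  refine ⟨a, ?_⟩
  congr 1
  have : (N : ℚ) ≠ 0 := by exact_mod_cast hN
  field_simp
  simp at ha
  linarith

theorem qz_int (a : ℤ) : (QuotientAddGroup.mk (a : ℚ) : ℚ ⧸ AddSubgroup.zmultiples (1 : ℚ)) = 0 := by
  rw [QuotientAddGroup.eq_zero_iff]
  exact ⟨a, by simp⟩

theorem qz_torsion (t : ℚ ⧸ AddSubgroup.zmultiples (1 : ℚ)) : ∃ N : ℕ, N ≠ 0 ∧ N • t = 0 := by
  obtain ⟨r, rfl⟩ := QuotientAddGroup.mk_surjective t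
  refine ⟨r.den, r.den_nz, ?_⟩
  rw [← QuotientAddGroup.mk_nsmul]
  have : r.den • r = ((r.num : ℤ) : ℚ) := by simp [Rat.den_mul_eq_num]
  rw [this, qz_int]

/-- if `z` has exact order `p^(n+1)`, it generates the `p^(n+1)`-torsion of `ℚ/ℤ`. -/
theorem qz_gen (p : ℕ) (hp : p.Prime) (n : ℕ) (z t : ℚ ⧸ AddSubgroup.zmultiples (1 : ℚ))
    (hz : p ^ (n+1) • z = 0) (hz' : p ^ n • z ≠ 0) (ht : p ^ (n+1) • t = 0) :
    ∃ c : ℤ, c • z = t := by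
  have hp0 : p ^ (n+1) ≠ 0 := pow_ne_zero _ hp.ne_zero
  obtain ⟨b, rfl⟩ := qz_exists z _ hp0 hz
  obtain ⟨a, rfl⟩ := qz_exists t _ hp0 ht
  have hpq : (p : ℚ) ≠ 0 := by exact_mod_cast hp.ne_zero
  have hb : ¬ (p : ℤ) ∣ b := by
    rintro ⟨c, rfl⟩
    apply hz'
    rw [← QuotientAddGroup.mk_nsmul]
    have : p ^ n • (((p * c : ℤ) : ℚ) / ((p ^ (n+1) : ℕ) : ℚ)) = (c : ℚ) := by
      rw [nsmul_eq_mul]; push_cast; field_simp; ring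
    rw [this, qz_int]
  have hcop : IsCoprime b ((p : ℤ) ^ (n+1)) :=
    (((Nat.prime_iff_prime_int.mp hp).coprime_iff_not_dvd.mpr hb).symm).pow_right
  obtain ⟨u, v, huv⟩ := hcop
  refine ⟨a * u, ?_⟩
  rw [← QuotientAddGroup.mk_zsmul, ← sub_eq_zero, ← QuotientAddGroup.mk_sub]
  have huv' : (u : ℚ) * b + v * p ^ (n+1) = 1 := by exact_mod_cast huv
  have : (a * u) • ((b : ℚ) / ((p ^ (n+1) : ℕ) : ℚ)) - (a : ℚ) / ((p ^ (n+1) : ℕ) : ℚ)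
      = ((-(a * v) : ℤ) : ℚ) := by
    rw [zsmul_eq_mul]; push_cast
    have : (p : ℚ) ^ (n+1) ≠ 0 := pow_ne_zero _ hpq
    field_simp
    linear_combination a * huv'
  rw [this, qz_int]

theorem prufer_of_torsion {Q : Type*} [AddCommGroup Q] (J : JoinProp Q) (D : PDiv Q)
    (p : ℕ) (hp : p.Prime) (x : Q) (hx : x ≠ 0) (hpx : p • x = 0) :
    Nonempty (Q ≃+ PruferGroup p hp) := by
  have : Fact p.Prime := ⟨hp⟩
  obtain ⟨φ₀, hφ⟩ := CharacterModule.exists_character_apply_ne_zero_of_ne_zero hx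
  let φ : Q →+ ℚ ⧸ AddSubgroup.zmultiples (1 : ℚ) := φ₀
  replace hφ : φ x ≠ 0 := hφ
  choose d hd using D p hp
  let s : ℕ → Q := fun n => d^[n] x
  have hs0 : s 0 = x := rfl
  have hs1 : ∀ n, p • s (n+1) = s n := by
    intro n
    simp only [s, Function.iterate_succ_apply', hd]
  have hsx : ∀ n, p ^ n • s n = x := by
    intro n
    induction n with
    | zero => simp [hs0]
    | succ n ih => rw [pow_succ, mul_smul, hs1, ih]
  have hst : ∀ n, p ^ (n+1) • s n = 0 := by
    intro n
    rw [pow_succ', mul_smul, hsx, hpx]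
  have hsle : ∀ m k, ∃ c : ℤ, s m = c • s (m+k) := by
    intro m k
    refine ⟨((p ^ k : ℕ) : ℤ), ?_⟩
    rw [natCast_zsmul]
    induction k with
    | zero => simp
    | succ k ih => rw [pow_succ, mul_smul, ← add_assoc, hs1, ih]
  -- the subgroup generated by the `s n`
  let E : AddSubgroup Q :=
    { carrier := {y | ∃ (n : ℕ) (c : ℤ), y = c • s n}
      zero_mem' := ⟨0, 0, by simp⟩
      neg_mem' := by rintro _ ⟨n, c, rfl⟩; exact ⟨n, -c, by simp⟩
      add_mem' := by
        rintro _ _ ⟨n, c, rfl⟩ ⟨m, e, rfl⟩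
        obtain ⟨u, hu⟩ := hsle n m
        obtain ⟨v, hv⟩ := hsle m n
        refine ⟨n + m, c * u + e * v, ?_⟩
        rw [add_comm m n] at hv
        rw [hu, hv, add_smul, mul_smul, mul_smul] }
  -- `p`-prime part
  let K : AddSubgroup Q :=
    { carrier := {y | ∃ m : ℕ, m.Coprime p ∧ m • φ y = 0}
      zero_mem' := ⟨1, by simp, by simp⟩
      neg_mem' := by rintro y ⟨m, h1, h2⟩; exact ⟨m, h1, by simp [h2]⟩
      add_mem' := by
        rintro y z ⟨m, h1, h2⟩ ⟨k, h3, h4⟩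
        refine ⟨m * k, h1.mul_left h3, ?_⟩
        rw [map_add, smul_add, mul_comm, mul_smul, h2, mul_comm, mul_smul, h4]; simp }
  have hφt : ∀ n, p ^ (n+1) • φ (s n) = 0 := fun n => by rw [← map_nsmul, hst, map_zero]
  have hφt' : ∀ n, p ^ n • φ (s n) ≠ 0 := fun n => by rwa [← map_nsmul, hsx]
  have gen : ∀ n t, p ^ n • t = 0 → ∃ y ∈ E, φ y = t := by
    intro n t ht
    obtain ⟨c, hc⟩ := qz_gen p hp n (φ (s n)) t (hφt n) (hφt' n)
      (by rw [pow_succ', mul_smul, ht, smul_zero])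
    exact ⟨c • s n, ⟨n, c, rfl⟩, by rw [map_zsmul, hc]⟩
  have hEK : E ⊔ K = ⊤ := by
    rw [eq_top_iff]
    intro y _
    obtain ⟨N, hN, hy⟩ := qz_torsion (φ y)
    obtain ⟨n, m, hm, rfl⟩ := Nat.exists_eq_pow_mul_and_not_dvd hN p hp.ne_one
    have hcop : m.Coprime p := ((Nat.Prime.coprime_iff_not_dvd hp).mpr hm).symm
    obtain ⟨u, v, huv⟩ := (Nat.isCoprime_iff_coprime.mpr (hcop.pow_right n))
    have hy1 : y = (u * m) • y + (v * (p ^ n : ℕ)) • y := by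
      rw [← add_smul, huv, one_smul]
    obtain ⟨e, heE, he⟩ := gen n (φ ((u * m) • y)) (by
      rw [← map_nsmul, ← natCast_zsmul, smul_smul, show ((p ^ n : ℕ) : ℤ) * (u * m) =
        u * ((p ^ n * m : ℕ) : ℤ) by push_cast; ring, mul_smul, natCast_zsmul, map_zsmul,
        map_nsmul, hy, smul_zero])
    have hy2 : y = e + (((u * m) • y - e) + (v * (p ^ n : ℕ)) • y) := by
      rw [← add_assoc, add_sub_cancel, ← hy1]
    rw [hy2]
    refine AddSubgroup.add_mem_sup heE (add_mem ?_ ?_)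
    · exact ⟨1, by simp, by rw [map_sub, he]; simp⟩
    · refine ⟨m, hcop, ?_⟩
      rw [← map_nsmul, ← natCast_zsmul, smul_smul, show (m : ℤ) * (v * (p ^ n : ℕ)) =
        v * ((p ^ n * m : ℕ) : ℤ) by push_cast; ring, mul_smul, natCast_zsmul, map_zsmul,
        map_nsmul, hy, smul_zero]
  have hK : K ≠ ⊤ := by
    intro h
    have : x ∈ K := h ▸ AddSubgroup.mem_top x
    obtain ⟨m, hm, hmx⟩ := this
    apply hφ
    have h1 : addOrderOf (φ x) ∣ m := addOrderOf_dvd_of_nsmul_eq_zero hmx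
    have h2 : addOrderOf (φ x) ∣ p :=
      addOrderOf_dvd_of_nsmul_eq_zero (by rw [← map_nsmul, hpx, map_zero])
    exact AddMonoid.addOrderOf_eq_one_iff.mp (Nat.eq_one_of_dvd_coprimes hm h1 h2)
  have hE : E = ⊤ := (J _ _ hEK).resolve_right hK
  have hEm : ∀ y : Q, ∃ (n : ℕ) (c : ℤ), y = c • s n := fun y => by
    have : y ∈ E := hE ▸ AddSubgroup.mem_top y
    exact this
  have hmem : ∀ y, φ y ∈ PruferGroup p hp := by
    intro y
    obtain ⟨n, c, rfl⟩ := hEm y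
    have : p ^ (n+1) • φ (c • s n) = 0 := by
      rw [← map_nsmul, smul_comm, hst, smul_zero, map_zero]
    exact ⟨n+1, this⟩
  refine ⟨AddEquiv.ofBijective (φ.codRestrict _ hmem) ⟨?_, ?_⟩⟩
  · rw [injective_iff_map_eq_zero]
    intro y hy
    replace hy : φ y = 0 := congrArg Subtype.val hy
    by_contra hy0
    obtain ⟨n, c, hc⟩ := hEm y
    -- take a multiple of y that is equal to x
    have h1 : addOrderOf y ∣ p ^ (n+1) := addOrderOf_dvd_of_nsmul_eq_zero (by
      rw [hc, smul_comm, hst, smul_zero])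
    obtain ⟨k, -, hk⟩ := (Nat.dvd_prime_pow hp).mp h1
    rcases k with _ | k
    · exact hy0 (AddMonoid.addOrderOf_eq_one_iff.mp (by simpa using hk))
    have hw0 : p ^ k • y ≠ 0 := by
      intro h
      have := addOrderOf_dvd_of_nsmul_eq_zero h
      rw [hk] at this
      exact absurd (Nat.le_of_dvd (pow_pos hp.pos _) this)
        (not_le.mpr (Nat.pow_lt_pow_right hp.one_lt (Nat.lt_succ_self k)))
    have hpw : p • (p ^ k • y) = 0 := by
      rw [smul_smul, ← pow_succ', ← hk, addOrderOf_nsmul_eq_zero]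
    have hφw : φ (p ^ k • y) = 0 := by rw [map_nsmul, hy, smul_zero]
    generalize p ^ k • y = w at hw0 hpw hφw
    -- minimal n with w a multiple of s n
    have main : ∀ n (c : ℤ), w = c • s n → False := by
      intro n
      induction n with
      | zero =>
        intro c hc
        have hcp : ¬ (p : ℤ) ∣ c := by
          rintro ⟨e, rfl⟩
          apply hw0
          rw [hc, mul_comm, mul_smul, natCast_zsmul, hs0, hpx, smul_zero]
        obtain ⟨u, v, huv⟩ := (Nat.prime_iff_prime_int.mp hp).coprime_iff_not_dvd.mpr hcp
        apply hφ
        have : x = v • w := by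
          rw [hc, hs0, smul_smul]
          conv_lhs => rw [← one_smul ℤ x, ← huv, add_smul, mul_smul, natCast_zsmul, hpx,
            smul_zero, zero_add]
        rw [this, map_zsmul, hφw, smul_zero]
      | succ n ih =>
        intro c hc
        by_cases hcp : (p : ℤ) ∣ c
        · obtain ⟨e, rfl⟩ := hcp
          exact ih e (by rw [hc, mul_comm, mul_smul, natCast_zsmul, hs1])
        · obtain ⟨u, v, huv⟩ := (Nat.prime_iff_prime_int.mp hp).coprime_iff_not_dvd.mpr hcp
          have h0 : c • s n = 0 := by
            rw [← hs1 n, smul_comm, ← hc, hpw]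
          have h00 : c • x = 0 := by
            rw [← hsx n, smul_comm, h0, smul_zero]
          apply hx
          rw [← one_smul ℤ x, ← huv, add_smul, mul_smul, mul_smul, natCast_zsmul, hpx, h00]
          simp
    obtain ⟨n, c, hc⟩ := hEm w
    exact main n c hc
  · rintro ⟨t, ht⟩
    obtain ⟨k, hk⟩ := ht
    obtain ⟨y, -, hy⟩ := gen k t hk
    exact ⟨y, Subtype.ext hy⟩

theorem prufer_of_props {Q : Type*} [AddCommGroup Q] [Nontrivial Q] (J : JoinProp Q)
    (D : PDiv Q) : ∃ (q : ℕ) (hq : q.Prime), Nonempty (Q ≃+ PruferGroup q hq) := by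
  by_cases h : ∃ (p : ℕ) (_ : p.Prime) (x : Q), x ≠ 0 ∧ p • x = 0
  · obtain ⟨p, hp, x, hx, hpx⟩ := h
    exact ⟨p, hp, prufer_of_torsion J D p hp x hx hpx⟩
  · exfalso
    push Not at h
    have tf : ∀ n : ℕ, n ≠ 0 → ∀ y : Q, n • y = 0 → y = 0 := by
      intro n hn y hy
      by_contra hy0
      have h1 : addOrderOf y ≠ 1 := fun h => hy0 (AddMonoid.addOrderOf_eq_one_iff.mp h)
      have hd : addOrderOf y ∣ n := addOrderOf_dvd_of_nsmul_eq_zero hy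
      have hpos : addOrderOf y ≠ 0 := fun h => hn (by simpa [h] using hd)
      obtain ⟨p, hp, k, hk⟩ := Nat.exists_prime_and_dvd h1
      refine h p hp (k • y) ?_ (by rw [smul_smul, ← hk, addOrderOf_nsmul_eq_zero])
      intro h0
      have hk0 : k ≠ 0 := by rintro rfl; exact hpos hk
      have := Nat.le_of_dvd (Nat.pos_of_ne_zero hk0) (addOrderOf_dvd_of_nsmul_eq_zero h0)
      have := hp.two_le
      nlinarith [Nat.pos_of_ne_zero hk0]
    obtain ⟨x, hx⟩ := exists_ne (0 : Q)
    let f := QuotientAddGroup.mk' (AddSubgroup.zmultiples x)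
    have hf : Function.Surjective f := QuotientAddGroup.mk'_surjective _
    have J' := J.of_surj f hf
    have D' := D.of_surj f hf
    have key : ∀ p : ℕ, p.Prime → ∃ y, y ≠ 0 ∧ p • y = (0 : Q ⧸ AddSubgroup.zmultiples x) := by
      intro p hp
      obtain ⟨y, hy⟩ := D p hp x
      refine ⟨f y, ?_, ?_⟩
      · intro h0
        obtain ⟨c, hc⟩ := (QuotientAddGroup.eq_zero_iff y).mp h0
        simp only at hc
        have h1 : ((p : ℤ) * c - 1) • x = 0 := by
          rw [sub_smul, mul_smul, hc, natCast_zsmul, hy, one_smul, sub_self]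
        have h2 : (p : ℤ) * c - 1 ≠ 0 := by
          intro h3
          have : (p : ℤ) ∣ 1 := ⟨c, by linarith⟩
          exact hp.one_lt.ne' (by exact_mod_cast Int.eq_one_of_dvd_one (by positivity) this)
        refine hx (tf ((p : ℤ) * c - 1).natAbs (Int.natAbs_ne_zero.mpr h2) x ?_)
        rcases Int.natAbs_eq ((p : ℤ) * c - 1) with h4 | h4
        · rw [← natCast_zsmul, ← h4, h1]
        · rw [← natCast_zsmul, ← neg_eq_zero, ← neg_smul, ← h4, h1]
      · rw [← map_nsmul, hy]
        exact (QuotientAddGroup.eq_zero_iff x).mpr (AddSubgroup.mem_zmultiples x)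
    obtain ⟨y, hy, hy2⟩ := key 2 Nat.prime_two
    obtain ⟨z, hz, hz3⟩ := key 3 Nat.prime_three
    obtain ⟨e⟩ := prufer_of_torsion J' D' 2 Nat.prime_two y hy hy2
    obtain ⟨k, hk⟩ := (e z).2
    have h3 : addOrderOf ((e z : PruferGroup 2 Nat.prime_two) : ℚ ⧸ AddSubgroup.zmultiples (1 : ℚ)) ∣ 3 := by
      apply addOrderOf_dvd_of_nsmul_eq_zero
      rw [← AddSubgroup.coe_nsmul, ← map_nsmul, hz3]; simp
    have h4 := Nat.eq_one_of_dvd_coprimes (Nat.Coprime.pow_left k (by norm_num : Nat.Coprime 2 3))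
      (addOrderOf_dvd_of_nsmul_eq_zero hk) h3
    have h5 := AddMonoid.addOrderOf_eq_one_iff.mp h4
    have h6 : e z = 0 := Subtype.ext h5
    exact hz (by simpa using h6)

end GroupAux

/-- Lemma 2.2 (minimax version): if `G` is infinite, `G ≠ G'`, `A/C_A(G)` is not minimax
but `A/C_A(H)` is minimax for every proper subgroup `H`, then `G` has no proper subgroups
of finite index and `G/G'` is a quasi-cyclic `q`-group for some prime `q`. -/
theorem minimax_proper_subgroups (R : Type*) [Ring R] (G : Type*) [Group G] [Infinite G]
    (A : Type*) [AddCommGroup A] [Module R A] [DistribMulAction G A] [SMulCommClass G R A]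
    (hG' : commutator G ≠ ⊤)
    (hG : ¬ Module.IsMinimax R (A ⧸ moduleCentralizer R A (⊤ : Subgroup G)))
    (hH : ∀ H : Subgroup G, H ≠ ⊤ → Module.IsMinimax R (A ⧸ moduleCentralizer R A H)) :
    (∀ H : Subgroup G, H.FiniteIndex → H = ⊤) ∧
    ∃ (q : ℕ) (hq : q.Prime),
      Nonempty (Abelianization G ≃* Multiplicative (PruferGroup q hq)) := by
  have J : ∀ H K : Subgroup G, H ⊔ K = ⊤ → H = ⊤ ∨ K = ⊤ := by
    intro H K hHK
    by_contra! hcon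
    have := isMinimax_inf _ _ (hH H hcon.1) (hH K hcon.2)
    rw [← moduleCentralizer_sup, hHK] at this
    exact hG this
  have FI := finiteIndex_eq_top_of_join J
  refine ⟨FI, ?_⟩
  have hsurj : Function.Surjective (Abelianization.of : G →* Abelianization G) :=
    QuotientGroup.mk'_surjective _
  have inj := Subgroup.comap_injective hsurj
  haveI : Nontrivial (Abelianization G) := by
    by_contra hn
    rw [not_nontrivial_iff_subsingleton] at hn
    apply hG'
    rw [eq_top_iff]
    intro g _
    have : Abelianization.of g = 1 := Subsingleton.elim _ _
    exact (QuotientGroup.eq_one_iff g).mp this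
  have J2 : JoinProp (Additive (Abelianization G)) := by
    intro H K hHK
    have h1 : AddSubgroup.toSubgroup' H ⊔ AddSubgroup.toSubgroup' K = ⊤ := by
      rw [← map_sup, hHK, map_top]
    have h2 : (AddSubgroup.toSubgroup' H).comap Abelianization.of ⊔
        (AddSubgroup.toSubgroup' K).comap Abelianization.of = ⊤ := by
      rw [Subgroup.comap_sup_eq _ _ _ hsurj, h1, Subgroup.comap_top]
    rcases J _ _ h2 with h | h
    · left
      apply AddSubgroup.toSubgroup'.injective
      rw [map_top]
      exact inj (by rw [h, Subgroup.comap_top])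
    · right
      apply AddSubgroup.toSubgroup'.injective
      rw [map_top]
      exact inj (by rw [h, Subgroup.comap_top])
  have FI2 : ∀ H : AddSubgroup (Additive (Abelianization G)), H.FiniteIndex → H = ⊤ := by
    intro H hHf
    have h0 : (AddSubgroup.toSubgroup' H).FiniteIndex := ⟨hHf.index_ne_zero⟩
    have h := FI ((AddSubgroup.toSubgroup' H).comap Abelianization.of) (by
      constructor
      rw [Subgroup.index_comap_of_surjective _ hsurj]
      exact h0.index_ne_zero)
    apply AddSubgroup.toSubgroup'.injective
    rw [map_top]
    exact inj (by rw [h, Subgroup.comap_top])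
  haveI : Nontrivial (Additive (Abelianization G)) := inferInstance
  obtain ⟨q, hq, ⟨e⟩⟩ := prufer_of_props J2 (pdiv_of_finiteIndex _ FI2)
  exact ⟨q, hq, ⟨AddEquiv.toMultiplicativeRight e⟩⟩
end

section
/- Let R be an associative ring, G an infinite group with G ≠ G' (G is not equal to its derived subgroup), and A an RG-module. If A/C_A(G) is not an Artinian R-module but A/C_A(H) is an Artinian R-module for every proper subgroup H of G, then G has no proper subgroups of finite index and G/G' is isomorphic to a quasi-cyclic q-group C_{q^∞} for some prime q. -/
lemma chain_pow {Q : Type*} [AddCommGroup Q] {p : ℕ} (s : ℕ → Q)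
    (hs : ∀ n, (p : ℤ) • s (n + 1) = s n) (n k : ℕ) : ((p : ℤ) ^ k) • s (n + k) = s n := by
  induction k with
  | zero => simp
  | succ k ih => rw [pow_succ, mul_smul, ← add_assoc, hs, ih]

lemma coprime_of_not_dvd {p : ℕ} (hp : p.Prime) {m : ℤ} (h : ¬ (p : ℤ) ∣ m) (k : ℕ) :
    ∃ u v : ℤ, u * m + v * (p : ℤ) ^ k = 1 := by
  have h1 : IsCoprime (p : ℤ) m :=
    (Prime.coprime_iff_not_dvd (Nat.prime_iff_prime_int.mp hp)).mpr h
  exact (h1.symm.pow_right : IsCoprime m ((p : ℤ) ^ k))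

lemma exists_chain {Q : Type*} [AddCommGroup Q]
    (hsup : ∀ H K : AddSubgroup Q, H ≠ ⊤ → K ≠ ⊤ → H ⊔ K ≠ ⊤)
    (hdiv : ∀ n : ℤ, n ≠ 0 → ∀ y : Q, ∃ z : Q, n • z = y)
    {p : ℕ} (hp : p.Prime) (x : Q) (hx : x ≠ 0) (hpx : (p : ℤ) • x = 0) :
    ∃ s : ℕ → Q, s 0 = x ∧ (∀ n, (p : ℤ) • s (n + 1) = s n) ∧
      ∀ y : Q, ∃ (n : ℕ) (m : ℤ), y = m • s n := by
  have hp0 : (p : ℤ) ≠ 0 := by exact_mod_cast hp.ne_zero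
  choose d hd using hdiv p hp0
  let s : ℕ → Q := fun n => d^[n] x
  have hs0 : s 0 = x := rfl
  have hs : ∀ n, (p : ℤ) • s (n + 1) = s n := fun n => by
    simp only [s, Function.iterate_succ_apply', hd]
  refine ⟨s, hs0, hs, ?_⟩
  have hpow := chain_pow s hs
  have htor : ∀ n, ((p : ℤ) ^ (n + 1)) • s n = 0 := fun n => by
    have := hpow 0 n
    rw [zero_add] at this
    rw [pow_succ', mul_smul, this, hs0, hpx]
  let L : AddSubgroup Q :=
    { carrier := {y | ∃ (n : ℕ) (m : ℤ), y = m • s n}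
      zero_mem' := ⟨0, 0, by simp⟩
      add_mem' := by
        rintro _ _ ⟨n, m, rfl⟩ ⟨n', m', rfl⟩
        refine ⟨n + n', m * (p : ℤ) ^ n' + m' * (p : ℤ) ^ n, ?_⟩
        rw [add_smul, mul_smul, mul_smul, hpow n n', add_comm n n', hpow n' n]
      neg_mem' := by
        rintro _ ⟨n, m, rfl⟩
        exact ⟨n, -m, by simp⟩ }
  have hLdiv : ∀ n : ℤ, n ≠ 0 → ∀ y : L, ∃ z : L, n • z = y := by
    rintro n hn ⟨_, k, c, rfl⟩
    have hfin : FiniteMultiplicity (p : ℤ) n := by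
      rw [Int.finiteMultiplicity_iff]
      exact ⟨by simpa using hp.ne_one, hn⟩
    obtain ⟨m, ham, hm⟩ := hfin.exists_eq_pow_mul_and_not_dvd
    generalize multiplicity (p : ℤ) n = a at ham
    obtain ⟨u, v, huv⟩ := coprime_of_not_dvd hp hm (k + a + 1)
    refine ⟨⟨(c * u) • s (k + a), k + a, c * u, rfl⟩, Subtype.ext ?_⟩
    change n • ((c * u) • s (k + a)) = c • s k
    have h2 : s (k + a) = (u * m) • s (k + a) := by
      conv_lhs => rw [← one_smul ℤ (s (k + a)), ← huv, add_smul, mul_smul v, htor, smul_zero, add_zero]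
    rw [← hpow k a]
    conv_rhs => rw [h2]
    rw [ham]
    simp only [smul_smul]
    congr 1
    ring
  have hsurj : ∀ {n : ℤ}, n ≠ 0 → Function.Surjective (fun a : L => n • a) :=
    fun hn y => hLdiv _ hn y
  letI : DivisibleBy L ℤ := divisibleByOfSMulRightSurj L ℤ hsurj
  obtain ⟨r, hr⟩ := (Module.Baer.of_divisible L).extension_property_addMonoidHom L.subtype
    Subtype.val_injective (AddMonoidHom.id L)
  have hr' : ∀ l : L, r l = l := fun l => DFunLike.congr_fun hr l
  have hxL : x ∈ L := ⟨0, 1, by simp [hs0]⟩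
  have hker : r.ker ≠ ⊤ := by
    intro h
    have : x ∈ r.ker := by rw [h]; trivial
    rw [AddMonoidHom.mem_ker] at this
    have h3 := hr' ⟨x, hxL⟩
    simp only [this] at h3
    exact hx (congrArg Subtype.val h3).symm
  have htop : L ⊔ r.ker = ⊤ := by
    rw [eq_top_iff]
    intro y _
    rw [AddSubgroup.mem_sup]
    refine ⟨r y, (r y).2, y - r y, ?_, by abel⟩
    rw [AddMonoidHom.mem_ker, map_sub, hr', sub_self]
  have hL : L = ⊤ := by
    by_contra h
    exact hsup _ _ h hker htop
  intro y
  have : y ∈ L := by rw [hL]; trivial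
  exact this

lemma circle_torsion (N : ℤ) (hN : N ≠ 0) (y : ℚ ⧸ AddSubgroup.zmultiples (1 : ℚ))
    (hy : N • y = 0) :
    ∃ b : ℤ, y = b • (QuotientAddGroup.mk (1 / (N : ℚ)) : ℚ ⧸ AddSubgroup.zmultiples (1 : ℚ)) := by
  induction y using QuotientAddGroup.induction_on with
  | H z =>
    rw [← QuotientAddGroup.mk_zsmul, QuotientAddGroup.eq_zero_iff,
      AddSubgroup.mem_zmultiples_iff] at hy
    obtain ⟨b, hb⟩ := hy
    refine ⟨b, ?_⟩
    rw [← QuotientAddGroup.mk_zsmul]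
    congr 1
    have hN' : (N : ℚ) ≠ 0 := by exact_mod_cast hN
    simp only [zsmul_eq_mul, mul_one] at hb ⊢
    rw [hb]
    field_simp

lemma iso_of_chain {Q : Type*} [AddCommGroup Q] {p : ℕ} (hp : p.Prime) (s : ℕ → Q)
    (hs0 : s 0 ≠ 0) (hps0 : (p : ℤ) • s 0 = 0) (hs : ∀ n, (p : ℤ) • s (n + 1) = s n)
    (hgen : ∀ y : Q, ∃ (n : ℕ) (m : ℤ), y = m • s n) :
    Nonempty (Q ≃+ PruferGroup p hp) := by
  have hpow := chain_pow s hs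
  have htor : ∀ n, ((p : ℤ) ^ (n + 1)) • s n = 0 := fun n => by
    have := hpow 0 n
    rw [zero_add] at this
    rw [pow_succ', mul_smul, this, hps0]
  obtain ⟨f', hf'⟩ := CharacterModule.exists_character_apply_ne_zero_of_ne_zero hs0
  obtain ⟨f, hf⟩ : ∃ f : Q →+ ℚ ⧸ AddSubgroup.zmultiples (1 : ℚ), f (s 0) ≠ 0 := ⟨f', hf'⟩
  have key : ∀ (n : ℕ) (m : ℤ), f (m • s n) = 0 → (p : ℤ) ∣ m := by
    intro n m h
    by_contra hd
    obtain ⟨u, v, huv⟩ := coprime_of_not_dvd hp hd 1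
    apply hf
    have h1 : s 0 = u • (p : ℤ) ^ n • m • s n := by
      have h2 := hpow 0 n
      rw [zero_add] at h2
      rw [smul_comm _ m, h2, smul_smul]
      conv_lhs => rw [← one_smul ℤ (s 0), ← huv, add_smul, mul_smul v, pow_one, hps0, smul_zero,
        add_zero]
    rw [h1, map_zsmul, map_zsmul, h, smul_zero, smul_zero]
  have hinj' : ∀ (n : ℕ) (m : ℤ), f (m • s n) = 0 → m • s n = 0 := by
    intro n
    induction n with
    | zero =>
      intro m h
      obtain ⟨c, rfl⟩ := key 0 m h
      rw [mul_comm, mul_smul, hps0, smul_zero]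
    | succ n ih =>
      intro m h
      obtain ⟨c, rfl⟩ := key _ m h
      rw [mul_comm, mul_smul, hs] at h ⊢
      exact ih c h
  have hmem : ∀ y, f y ∈ PruferGroup p hp := by
    intro y
    obtain ⟨n, m, rfl⟩ := hgen y
    refine ⟨n + 1, ?_⟩
    have h1 : p ^ (n + 1) • s n = 0 := by
      have := htor n
      rw [← Nat.cast_pow, natCast_zsmul] at this
      exact this
    rw [← map_nsmul, smul_comm, h1, smul_zero, map_zero]
  refine ⟨AddEquiv.ofBijective (f.codRestrict (PruferGroup p hp) hmem) ⟨?_, ?_⟩⟩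
  · rw [injective_iff_map_eq_zero]
    intro y hy
    obtain ⟨n, m, rfl⟩ := hgen y
    exact hinj' n m (congrArg Subtype.val hy)
  · rintro ⟨y, hy⟩
    obtain ⟨k, hk⟩ := hy
    have hp0 : ((p : ℤ) ^ (k + 1)) ≠ 0 := pow_ne_zero _ (by exact_mod_cast hp.ne_zero)
    have hy' : ((p : ℤ) ^ (k + 1)) • y = 0 := by
      rw [← Nat.cast_pow, natCast_zsmul, pow_succ', mul_smul]
      erw [hk]
      rw [smul_zero]
    obtain ⟨a, ha⟩ := circle_torsion _ hp0 y hy'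
    obtain ⟨b, hb⟩ := circle_torsion _ hp0 (f (s k)) (by rw [← map_zsmul, htor, map_zero])
    set c : ℚ ⧸ AddSubgroup.zmultiples (1 : ℚ) :=
      QuotientAddGroup.mk (1 / (((p : ℤ) ^ (k + 1) : ℤ) : ℚ)) with hc
    have hpc : ((p : ℤ) ^ (k + 1)) • c = 0 := by
      rw [hc, ← QuotientAddGroup.mk_zsmul, QuotientAddGroup.eq_zero_iff,
        AddSubgroup.mem_zmultiples_iff]
      refine ⟨1, ?_⟩
      rw [one_smul, zsmul_eq_mul, mul_one_div_cancel]
      exact_mod_cast hp0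
    have hbd : ¬ (p : ℤ) ∣ b := by
      rintro ⟨e, rfl⟩
      apply hf
      have h2 := hpow 0 k
      rw [zero_add] at h2
      rw [← h2, map_zsmul, hb, smul_smul, ← mul_assoc, ← pow_succ, mul_comm, mul_smul, hpc,
        smul_zero]
    obtain ⟨u, v, huv⟩ := coprime_of_not_dvd hp hbd (k + 1)
    refine ⟨(a * u) • s k, Subtype.ext ?_⟩
    change f ((a * u) • s k) = y
    rw [map_zsmul, hb, ha, mul_smul, smul_smul u]
    congr 1
    conv_rhs => rw [← one_smul ℤ c, ← huv, add_smul, mul_smul v, hpc, smul_zero, add_zero]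

lemma exists_order_prime {Q : Type*} [AddCommGroup Q]
    (hsup : ∀ H K : AddSubgroup Q, H ≠ ⊤ → K ≠ ⊤ → H ⊔ K ≠ ⊤)
    (hdiv : ∀ n : ℤ, n ≠ 0 → ∀ y : Q, ∃ z : Q, n • z = y) [Nontrivial Q] :
    ∃ (p : ℕ) (_ : p.Prime) (x : Q), x ≠ 0 ∧ (p : ℤ) • x = 0 := by
  by_cases ht : ∃ x : Q, x ≠ 0 ∧ IsOfFinAddOrder x
  · obtain ⟨x, hx, hfin⟩ := ht
    have h1 : addOrderOf x ≠ 1 := by simpa using hx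
    have hpos : 0 < addOrderOf x := hfin.addOrderOf_pos
    have hp := Nat.minFac_prime h1
    obtain ⟨c, hc⟩ := Nat.minFac_dvd (addOrderOf x)
    refine ⟨_, hp, c • x, ?_, ?_⟩
    · intro h
      have h2 := Nat.le_of_dvd (Nat.pos_of_ne_zero (by rintro rfl; omega))
        (addOrderOf_dvd_of_nsmul_eq_zero h)
      have h3 := hp.two_le
      nlinarith
    · rw [natCast_zsmul, smul_smul, ← hc, addOrderOf_nsmul_eq_zero]
  · exfalso
    push Not at ht
    have htf : ∀ (n : ℤ) (x : Q), n ≠ 0 → n • x = 0 → x = 0 := by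
      intro n x hn h
      by_contra hx
      exact ht x hx (isOfFinAddOrder_iff_zsmul_eq_zero.mpr ⟨n, hn, h⟩)
    obtain ⟨x, hx⟩ := exists_ne (0 : Q)
    let K := AddSubgroup.zmultiples x
    let π := QuotientAddGroup.mk' K
    have hπ : Function.Surjective π := QuotientAddGroup.mk'_surjective K
    have hdiv' : ∀ n : ℤ, n ≠ 0 → ∀ y : Q ⧸ K, ∃ z : Q ⧸ K, n • z = y := by
      intro n hn y
      obtain ⟨y, rfl⟩ := hπ y
      obtain ⟨z, rfl⟩ := hdiv n hn y
      exact ⟨π z, (map_zsmul π n z).symm⟩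
    have hsup' : ∀ H L : AddSubgroup (Q ⧸ K), H ≠ ⊤ → L ≠ ⊤ → H ⊔ L ≠ ⊤ := by
      intro H L hH hL h
      have inj := AddSubgroup.comap_injective hπ
      refine hsup (H.comap π) (L.comap π) ?_ ?_ ?_
      · intro h'; exact hH (inj (by rw [h', AddSubgroup.comap_top]))
      · intro h'; exact hL (inj (by rw [h', AddSubgroup.comap_top]))
      · rw [AddSubgroup.comap_sup_eq _ _ _ hπ, h, AddSubgroup.comap_top]
    have hel : ∀ q : ℕ, q.Prime → ∃ y : Q ⧸ K, y ≠ 0 ∧ (q : ℤ) • y = 0 := by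
      intro q hq
      obtain ⟨y, hy⟩ := hdiv q (by exact_mod_cast hq.ne_zero) x
      refine ⟨π y, ?_, ?_⟩
      · intro h
        have h' : y ∈ K := (QuotientAddGroup.eq_zero_iff y).mp h
        obtain ⟨k, hk⟩ := AddSubgroup.mem_zmultiples_iff.mp h'
        have h2 : ((q : ℤ) * k - 1) • x = 0 := by
          rw [sub_smul, mul_smul, hk, hy, one_smul, sub_self]
        refine hx (htf _ x ?_ h2)
        intro h3
        have h4 : (q : ℤ) ∣ 1 := ⟨k, by linarith⟩
        have h5 : q ∣ 1 := by exact_mod_cast h4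
        exact hq.ne_one (Nat.dvd_one.mp h5)
      · rw [← map_zsmul, hy]
        exact (QuotientAddGroup.eq_zero_iff x).mpr (AddSubgroup.mem_zmultiples x)
    obtain ⟨y, hy0, hy2⟩ := hel 2 Nat.prime_two
    obtain ⟨w, hw0, hw3⟩ := hel 3 Nat.prime_three
    obtain ⟨s, hs0, hs, hgen⟩ := exists_chain hsup' hdiv' Nat.prime_two y hy0 hy2
    obtain ⟨n, m, hw⟩ := hgen w
    have h2w : (((2 : ℕ) : ℤ) ^ (n + 1)) • w = 0 := by
      have h := chain_pow s hs 0 n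
      rw [zero_add] at h
      rw [hw, smul_comm, pow_succ', mul_smul, h, hs0, hy2, smul_zero]
    obtain ⟨u, v, huv⟩ := coprime_of_not_dvd Nat.prime_two (m := 3) (by norm_num) (n + 1)
    apply hw0
    rw [← one_smul ℤ w, ← huv, add_smul, mul_smul, mul_smul, h2w, smul_zero, add_zero]
    have : (3 : ℤ) • w = 0 := by exact_mod_cast hw3
    rw [this, smul_zero]

lemma divisible_of_no_finite_index {Q : Type*} [AddCommGroup Q]
    (hfi : ∀ H : AddSubgroup Q, H.FiniteIndex → H = ⊤)
    (n : ℤ) (hn : n ≠ 0) (y : Q) : ∃ z : Q, n • z = y := by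
  let K : AddSubgroup Q := (zsmulAddGroupHom n : Q →+ Q).range
  by_contra hcon
  have hy : (QuotientAddGroup.mk y : Q ⧸ K) ≠ 0 := by
    intro h
    obtain ⟨z, hz⟩ := (QuotientAddGroup.eq_zero_iff y).mp h
    exact hcon ⟨z, hz⟩
  obtain ⟨f', hf'⟩ := CharacterModule.exists_character_apply_ne_zero_of_ne_zero hy
  obtain ⟨f, hf⟩ : ∃ f : Q ⧸ K →+ AddCircle (1 : ℚ), f (QuotientAddGroup.mk y) ≠ 0 := ⟨f', hf'⟩
  let g : Q →+ AddCircle (1 : ℚ) := f.comp (QuotientAddGroup.mk' K)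
  have hg : ∀ z, n.natAbs • g z = 0 := by
    intro z
    have h1 : n • g z = 0 := by
      rw [← map_zsmul]
      change f (QuotientAddGroup.mk (n • z)) = 0
      have hz : n • z ∈ K := ⟨z, rfl⟩
      rw [(QuotientAddGroup.eq_zero_iff (n • z)).mpr hz, map_zero]
    rwa [natAbs_nsmul_eq_zero]
  have hfin : Finite g.range := by
    refine Set.Finite.subset (AddCircle.finite_torsion (1 : ℚ) (Int.natAbs_pos.mpr hn)) ?_
    rintro _ ⟨z, rfl⟩
    exact hg z
  have := hfi g.ker (AddSubgroup.finiteIndex_ker g)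
  have h2 : y ∈ g.ker := by rw [this]; trivial
  exact hf h2

lemma sup_ne_top_of_artinian (R : Type*) [Ring R] (G : Type*) [Group G]
    (A : Type*) [AddCommGroup A] [Module R A] [DistribMulAction G A] [SMulCommClass G R A]
    (hG : ¬ IsArtinian R (A ⧸ moduleCentralizer R A (⊤ : Subgroup G)))
    (hH : ∀ H : Subgroup G, H ≠ ⊤ → IsArtinian R (A ⧸ moduleCentralizer R A H))
    (H K : Subgroup G) (h1 : H ≠ ⊤) (h2 : K ≠ ⊤) : H ⊔ K ≠ ⊤ := by
  intro htop
  apply hG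
  have := hH H h1
  have := hH K h2
  let φ : A →ₗ[R] (A ⧸ moduleCentralizer R A H) × (A ⧸ moduleCentralizer R A K) :=
    (Submodule.mkQ _).prod (Submodule.mkQ _)
  have hφ : LinearMap.ker φ = moduleCentralizer R A (⊤ : Subgroup G) := by
    rw [LinearMap.ker_prod, Submodule.ker_mkQ, Submodule.ker_mkQ]
    apply le_antisymm
    · rintro a ⟨ha, hb⟩ g -
      have : H ⊔ K ≤ MulAction.stabilizer G a := sup_le (fun g hg => ha g hg) (fun g hg => hb g hg)
      rw [htop] at this
      exact this (Subgroup.mem_top g)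
    · intro a ha
      exact ⟨fun g _ => ha g trivial, fun g _ => ha g trivial⟩
  rw [← hφ]
  exact isArtinian_of_injective _ (LinearMap.ker_eq_bot.mp (Submodule.ker_liftQ_eq_bot' _ φ rfl))

lemma not_fg_of_sup {G : Type*} [Group G] [Infinite G]
    (hsup : ∀ H K : Subgroup G, H ≠ ⊤ → K ≠ ⊤ → H ⊔ K ≠ ⊤) (S : Finset G) :
    Subgroup.closure (S : Set G) ≠ ⊤ := by
  classical
  have hcyc : ∀ g : G, Subgroup.zpowers g ≠ ⊤ := by
    intro g hg
    have hord : orderOf g = 0 := by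
      have h := Nat.card_zpowers g
      rw [hg, Subgroup.card_top, Nat.card_eq_zero_of_infinite] at h
      exact h.symm
    have hk : ∀ k : ℤ, k ≠ 1 → k ≠ -1 → Subgroup.zpowers (g ^ k) ≠ ⊤ := by
      intro k hk1 hk2 h
      have : g ∈ Subgroup.zpowers (g ^ k) := by rw [h]; trivial
      obtain ⟨j, hj⟩ := Subgroup.mem_zpowers_iff.mp this
      rw [← zpow_mul] at hj
      have hinj := injective_zpow_iff_not_isOfFinOrder.mpr (orderOf_eq_zero_iff.mp hord)
      have h1 : k * j = 1 := hinj (by simpa using hj)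
      rcases Int.eq_one_or_neg_one_of_mul_eq_one h1 with h | h
      · exact hk1 h
      · exact hk2 h
    refine hsup _ _ (hk 2 (by norm_num) (by norm_num)) (hk 3 (by norm_num) (by norm_num)) ?_
    rw [eq_top_iff, ← hg, Subgroup.zpowers_le]
    have h2 := Subgroup.mem_sup_left (T := Subgroup.zpowers (g ^ (3 : ℤ)))
      (Subgroup.mem_zpowers (g ^ (2 : ℤ)))
    have h3 := Subgroup.mem_sup_right (S := Subgroup.zpowers (g ^ (2 : ℤ)))
      (Subgroup.mem_zpowers (g ^ (3 : ℤ)))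
    have h4 := mul_mem h3 (inv_mem h2)
    rw [← zpow_neg, ← zpow_add] at h4
    simpa using h4
  induction S using Finset.induction_on with
  | empty =>
    simp only [Finset.coe_empty, Subgroup.closure_empty]
    exact bot_ne_top
  | insert a S _ ih =>
    rw [Finset.coe_insert, Set.insert_eq, Subgroup.closure_union, ← Subgroup.zpowers_eq_closure]
    exact hsup _ _ (hcyc a) ih

lemma no_finite_index {G : Type*} [Group G] [Infinite G]
    (hsup : ∀ H K : Subgroup G, H ≠ ⊤ → K ≠ ⊤ → H ⊔ K ≠ ⊤) (H : Subgroup G)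
    (hfi : H.FiniteIndex) : H = ⊤ := by
  by_contra hH
  have : Finite (G ⧸ H) := Subgroup.finite_quotient_of_finiteIndex
  have hfin : (Set.range (Quotient.out : G ⧸ H → G)).Finite :=
    Set.finite_range (ι := G ⧸ H) _
  refine hsup H _ hH (not_fg_of_sup hsup hfin.toFinset) ?_
  rw [eq_top_iff]
  intro g _
  have h1 : (QuotientGroup.mk g : G ⧸ H).out ∈ Subgroup.closure (hfin.toFinset : Set G) :=
    Subgroup.subset_closure (by simp)
  have h2 : ((QuotientGroup.mk g : G ⧸ H).out)⁻¹ * g ∈ H :=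
    QuotientGroup.eq.mp (Quotient.out_eq _)
  have h3 := mul_mem (Subgroup.mem_sup_right (S := H) h1) (Subgroup.mem_sup_left h2)
  simpa using h3

theorem artinian_proper_subgroups (R : Type*) [Ring R] (G : Type*) [Group G] [Infinite G]
    (A : Type*) [AddCommGroup A] [Module R A] [DistribMulAction G A] [SMulCommClass G R A]
    (hG' : commutator G ≠ ⊤)
    (hG : ¬ IsArtinian R (A ⧸ moduleCentralizer R A (⊤ : Subgroup G)))
    (hH : ∀ H : Subgroup G, H ≠ ⊤ → IsArtinian R (A ⧸ moduleCentralizer R A H)) :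
    (∀ H : Subgroup G, H.FiniteIndex → H = ⊤) ∧
    ∃ (q : ℕ) (hq : q.Prime),
      Nonempty (Abelianization G ≃* Multiplicative (PruferGroup q hq)) := by
  have hsup := sup_ne_top_of_artinian R G A hG hH
  have hfi := no_finite_index hsup
  refine ⟨hfi, ?_⟩
  let π : G →* Abelianization G := Abelianization.of
  have hπ : Function.Surjective π := QuotientGroup.mk'_surjective _
  have inj := Subgroup.comap_injective hπ
  have : Nontrivial (Abelianization G) := by
    by_contra hn
    rw [not_nontrivial_iff_subsingleton] at hn
    apply hG'
    rw [eq_top_iff]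
    intro g _
    rw [← Abelianization.ker_of]
    exact Subsingleton.elim _ _
  let Q := Additive (Abelianization G)
  have toH : ∀ H : AddSubgroup Q, ∃ H' : Subgroup (Abelianization G), Subgroup.toAddSubgroup H' = H :=
    fun H => Subgroup.toAddSubgroup.surjective H
  have hsupQ : ∀ H K : AddSubgroup Q, H ≠ ⊤ → K ≠ ⊤ → H ⊔ K ≠ ⊤ := by
    intro H K hH hK h
    obtain ⟨H, rfl⟩ := toH H
    obtain ⟨K, rfl⟩ := toH K
    rw [← map_sup, map_eq_top_iff] at h
    rw [Ne, map_eq_top_iff] at hH hK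
    refine hsup (H.comap π) (K.comap π) ?_ ?_ ?_
    · intro h'; exact hH (inj (by rw [h', Subgroup.comap_top]))
    · intro h'; exact hK (inj (by rw [h', Subgroup.comap_top]))
    · rw [Subgroup.comap_sup_eq _ _ _ hπ, h, Subgroup.comap_top]
  have hfiQ : ∀ H : AddSubgroup Q, H.FiniteIndex → H = ⊤ := by
    intro H hf
    obtain ⟨H, rfl⟩ := toH H
    rw [map_eq_top_iff]
    apply inj
    rw [Subgroup.comap_top]
    apply hfi
    constructor
    rw [Subgroup.index_comap_of_surjective _ hπ]
    have := hf.index_ne_zero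
    rwa [Subgroup.index_toAddSubgroup] at this
  have hdiv := divisible_of_no_finite_index hfiQ
  have : Nontrivial Q := inferInstanceAs (Nontrivial (Additive (Abelianization G)))
  obtain ⟨p, hp, x, hx, hpx⟩ := exists_order_prime hsupQ hdiv
  obtain ⟨s, hs0, hs, hgen⟩ := exists_chain hsupQ hdiv hp x hx hpx
  obtain ⟨e⟩ := iso_of_chain hp s (by rwa [hs0]) (by rwa [hs0]) hs hgen
  exact ⟨p, hp, ⟨AddEquiv.toMultiplicativeRight e⟩⟩
end

section
/- Let R be an associative ring, G an infinite group with G ≠ G' (G is not equal to its derived subgroup), and A an RG-module. If A/C_A(G) is an infinite R-module but A/C_A(H) is a finite R-module for every proper subgroup H of G, then G has no proper subgroups of finite index and G/G' is isomorphic to a quasi-cyclic q-group C_{q^∞} for some prime q. -/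
def HolProp (B : Type*) [AddCommGroup B] : Prop :=
  ∀ H K : AddSubgroup B, H ⊔ K = ⊤ → H = ⊤ ∨ K = ⊤

lemma hol_primary {B C : Type*} [AddCommGroup B] [AddCommGroup C] (hB : HolProp B)
    (f : B →+ C) (ht : ∀ y : C, 0 < addOrderOf y) (p : ℕ) (hp : p.Prime) (x0 : B)
    (hx0 : p ∣ addOrderOf (f x0)) (x : B) : ∃ k : ℕ, p ^ k • f x = 0 := by
  let S : AddSubgroup B :=
    { carrier := {x | ∃ k : ℕ, p ^ k • f x = 0}
      zero_mem' := ⟨0, by simp⟩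
      add_mem' := by
        rintro a b ⟨k, hk⟩ ⟨l, hl⟩
        refine ⟨k + l, ?_⟩
        rw [map_add, nsmul_add, pow_add, mul_nsmul, hk, mul_nsmul', hl]
        simp
      neg_mem' := by
        rintro a ⟨k, hk⟩
        exact ⟨k, by rw [map_neg, smul_neg, hk, neg_zero]⟩ }
  let T : AddSubgroup B :=
    { carrier := {x | ∃ m : ℕ, ¬ p ∣ m ∧ m • f x = 0}
      zero_mem' := ⟨1, hp.one_lt.ne' ∘ Nat.dvd_one.1, by simp⟩
      add_mem' := by
        rintro a b ⟨k, hk', hk⟩ ⟨l, hl', hl⟩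
        refine ⟨k * l, fun h => ((hp.dvd_mul).1 h).elim hk' hl', ?_⟩
        rw [map_add, nsmul_add, mul_nsmul, hk, mul_nsmul', hl]
        simp
      neg_mem' := by
        rintro a ⟨k, hk', hk⟩
        exact ⟨k, hk', by rw [map_neg, smul_neg, hk, neg_zero]⟩ }
  have hST : S ⊔ T = ⊤ := by
    rw [eq_top_iff]
    intro x _
    obtain ⟨k, m, hm, hN⟩ := Nat.exists_eq_pow_mul_and_not_dvd (ht (f x)).ne' p hp.ne_one
    have hc : Nat.Coprime (p ^ k) m := Nat.Coprime.pow_left _ ((hp.coprime_iff_not_dvd).2 hm)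
    have hz : (p ^ k * m) • f x = 0 := by rw [← hN]; exact addOrderOf_nsmul_eq_zero _
    have hb : (1 : ℤ) = (p ^ k : ℕ) * Nat.gcdA (p ^ k) m + m * Nat.gcdB (p ^ k) m := by
      rw [← Nat.gcd_eq_gcd_ab, hc]; rfl
    have hx : x = Nat.gcdB (p ^ k) m • (m • x) + Nat.gcdA (p ^ k) m • (p ^ k • x) := by
      rw [← natCast_zsmul x m, ← natCast_zsmul x (p ^ k), smul_smul, smul_smul, ← add_smul]
      rw [mul_comm _ (m : ℤ), mul_comm _ ((p ^ k : ℕ) : ℤ), add_comm, ← hb, one_smul]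
    rw [hx]
    refine AddSubgroup.add_mem_sup (S.zsmul_mem ?_ _) (T.zsmul_mem ?_ _)
    · exact ⟨k, by rw [map_nsmul, ← mul_nsmul', hz]⟩
    · exact ⟨m, hm, by rw [map_nsmul, ← mul_nsmul, hz]⟩
  rcases hB S T hST with h | h
  · have : x ∈ S := h ▸ AddSubgroup.mem_top x
    exact this
  · have : x0 ∈ T := h ▸ AddSubgroup.mem_top x0
    obtain ⟨m, hm, h0⟩ := this
    exact absurd (hx0.trans (addOrderOf_dvd_of_nsmul_eq_zero h0)) hm

lemma circ_torsion (y : AddCircle (1 : ℚ)) : 0 < addOrderOf y := by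
  induction y using QuotientAddGroup.induction_on with
  | H r =>
    have := AddCircle.addOrderOf_coe_rat (p := (1 : ℚ)) (q := r)
    simp only [Rat.cast_id, mul_one] at this
    rw [this]
    exact r.pos

lemma hol_torsion {B : Type*} [AddCommGroup B] (hB : HolProp B) (b : B) : 0 < addOrderOf b := by
  by_contra hb
  have hb0 : ¬ IsOfFinAddOrder b := fun h => hb h.addOrderOf_pos
  let i : ℤ →ₗ[ℤ] B := LinearMap.toSpanSingleton ℤ B b
  have hi : Function.Injective i := by
    intro m n h
    exact (injective_zsmul_iff_not_isOfFinAddOrder.2 hb0) (by simpa [i] using h)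
  let y : AddCircle (1 : ℚ) := ((1 / (6 : ℕ) : ℚ) : AddCircle (1 : ℚ))
  have hy : addOrderOf y = 6 := AddCircle.addOrderOf_period_div (p := (1 : ℚ)) (n := 6) (by norm_num)
  let d : ℤ →+ AddCircle (1 : ℚ) := zmultiplesHom _ y
  obtain ⟨c, hc⟩ := CharacterModule.dual_surjective_of_injective i hi d
  let c' : B →+ AddCircle (1 : ℚ) := c
  have hcb : c' b = y := by
    have h1 : c' (i 1) = d 1 := DFunLike.congr_fun (F := ℤ →+ AddCircle (1 : ℚ)) hc 1
    simpa [i, d] using h1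
  have h2 := hol_primary hB c' circ_torsion 2 Nat.prime_two b (by rw [hcb, hy]; norm_num) b
  obtain ⟨k, hk⟩ := h2
  rw [hcb] at hk
  have := addOrderOf_dvd_of_nsmul_eq_zero hk
  rw [hy] at this
  have h3 : 3 ∣ 2 ^ k := (by norm_num : 3 ∣ 6).trans this
  have := Nat.prime_three.dvd_of_dvd_pow h3
  norm_num at this

lemma fin_div {B : Type*} [AddCommGroup B]
    (hF : ∀ H : AddSubgroup B, H.FiniteIndex → H = ⊤) (n : ℕ) (hn : 0 < n) (x : B) :
    ∃ y, n • y = x := by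
  by_contra hx
  let D : AddSubgroup B := (nsmulAddMonoidHom (α := B) n).range
  have hxD : (QuotientAddGroup.mk x : B ⧸ D) ≠ 0 := by
    rw [Ne, QuotientAddGroup.eq_zero_iff]
    rintro ⟨y, hy⟩
    exact hx ⟨y, hy⟩
  obtain ⟨c, hc⟩ := CharacterModule.exists_character_apply_ne_zero_of_ne_zero hxD
  let c' : (B ⧸ D) →+ AddCircle (1 : ℚ) := c
  let e : B →+ AddCircle (1 : ℚ) := c'.comp (QuotientAddGroup.mk' D)
  have he : ∀ z, n • e z = 0 := by
    intro z
    rw [← map_nsmul]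
    change c' (QuotientAddGroup.mk (n • z)) = 0
    rw [(QuotientAddGroup.eq_zero_iff (N := D) (n • z)).2 ⟨z, rfl⟩, map_zero]
  have hfin : Finite e.range := by
    refine Set.Finite.subset (AddCircle.finite_torsion (1 : ℚ) hn) ?_
    rintro _ ⟨z, rfl⟩
    exact he z
  have hker : e.ker = ⊤ := hF _ (AddSubgroup.finiteIndex_ker e)
  have : x ∈ e.ker := hker ▸ AddSubgroup.mem_top x
  exact hc this

lemma circ_mult (N : ℕ) (hN : 0 < N) (x y : AddCircle (1 : ℚ)) (hx : addOrderOf x = N)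
    (hy : N • y = 0) : y ∈ AddSubgroup.zmultiples x := by
  have hf := AddCircle.finite_torsion (1 : ℚ) hN
  have hc := AddCircle.card_torsion_le_of_isSMulRegular (1 : ℚ) N hN.ne'
    (.of_right_eq_zero_of_smul fun _ ↦ by simp [hN.ne'])
  have hsub : (AddSubgroup.zmultiples x : Set (AddCircle (1 : ℚ))) ⊆ {u | N • u = 0} := by
    rintro _ ⟨k, rfl⟩
    change N • (k • x) = 0
    rw [smul_comm, ← hx, addOrderOf_nsmul_eq_zero, smul_zero]
  have hcard : (AddSubgroup.zmultiples x : Set (AddCircle (1 : ℚ))).encard = N := by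
    rw [← (hf.subset hsub).cast_ncard_eq, ← Nat.card_coe_set_eq]
    congr 1
    rw [← hx]
    exact Nat.card_zmultiples x
  have := hf.eq_of_subset_of_encard_le' hsub (by rw [hcard]; exact hc)
  have h : y ∈ {u : AddCircle (1 : ℚ) | N • u = 0} := hy
  rw [← this] at h
  exact h

lemma hol_prufer {B : Type*} [AddCommGroup B] [Nontrivial B] (hB : HolProp B)
    (hF : ∀ H : AddSubgroup B, H.FiniteIndex → H = ⊤) :
    ∃ (q : ℕ) (hq : q.Prime), Nonempty (B ≃+ PruferGroup q hq) := by
  have ht := hol_torsion hB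
  obtain ⟨a, ha⟩ := exists_ne (0 : B)
  have ha1 : addOrderOf a ≠ 1 := by simpa using ha
  obtain ⟨q, hq, hqa⟩ := Nat.exists_prime_and_dvd ha1
  refine ⟨q, hq, ?_⟩
  have hprim : ∀ x : B, ∃ k : ℕ, q ^ k • x = 0 :=
    hol_primary hB (AddMonoidHom.id B) ht q hq a hqa
  obtain ⟨b, hb⟩ : ∃ b : B, addOrderOf b = q :=
    ⟨_, orderOf_pow_orderOf_div (G := Multiplicative B) (x := Multiplicative.ofAdd a) (ht a).ne' hqa⟩
  have hb0 : b ≠ 0 := by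
    rintro rfl
    rw [addOrderOf_zero] at hb
    exact hq.one_lt.ne hb
  obtain ⟨c0, hc0⟩ := CharacterModule.exists_character_apply_ne_zero_of_ne_zero hb0
  let c : B →+ AddCircle (1 : ℚ) := c0
  have hcb : c b ≠ 0 := hc0
  choose r hr using fin_div hF q hq.pos
  let s : ℕ → B := fun n => Nat.rec b (fun _ x => r x) n
  have hs0 : s 0 = b := rfl
  have hs : ∀ n, q • s (n + 1) = s n := fun n => hr (s n)
  have hsn : ∀ n, q ^ n • s n = b := by
    intro n
    induction n with
    | zero => simp [hs0]
    | succ n ih => rw [pow_succ', mul_nsmul, hs, ih]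
  have hqb : q • b = 0 := by
    rw [← hb]; exact addOrderOf_nsmul_eq_zero b
  have hsn1 : ∀ n, q ^ (n + 1) • s n = 0 := by
    intro n
    rw [pow_succ, mul_nsmul, hsn, hqb]
  have : Fact q.Prime := ⟨hq⟩
  have hord : ∀ n, addOrderOf (c (s n)) = q ^ (n + 1) := by
    intro n
    refine addOrderOf_eq_prime_pow ?_ ?_
    · rw [← map_nsmul, hsn]; exact hcb
    · rw [← map_nsmul, hsn1, map_zero]
  have hle : ∀ n k, s n ∈ AddSubgroup.zmultiples (s (n + k)) := by
    intro n k
    induction k with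
    | zero => exact AddSubgroup.mem_zmultiples _
    | succ k ih =>
      refine (AddSubgroup.zmultiples_le_of_mem ?_) ih
      rw [← hs (n + k)]
      exact AddSubgroup.nsmul_mem _ (AddSubgroup.mem_zmultiples _) _
  let P : AddSubgroup B :=
    { carrier := {x | ∃ n, x ∈ AddSubgroup.zmultiples (s n)}
      zero_mem' := ⟨0, zero_mem _⟩
      add_mem' := by
        rintro x y ⟨m, hm⟩ ⟨n, hn⟩
        refine ⟨m + n, add_mem ((AddSubgroup.zmultiples_le_of_mem (hle m n)) hm) ?_⟩
        rw [add_comm]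
        exact (AddSubgroup.zmultiples_le_of_mem (hle n m)) hn
      neg_mem' := by
        rintro x ⟨m, hm⟩
        exact ⟨m, neg_mem hm⟩ }
  have hsurj : ∀ y : AddCircle (1 : ℚ), (∃ k : ℕ, q ^ k • y = 0) → ∃ x ∈ P, c x = y := by
    rintro y ⟨k, hk⟩
    have := circ_mult (q ^ (k + 1)) (pow_pos hq.pos _) (c (s k)) y (hord k)
      (by rw [pow_succ, mul_nsmul, hk, nsmul_zero])
    obtain ⟨z, hz⟩ := this
    exact ⟨z • s k, ⟨k, ⟨z, rfl⟩⟩, by rw [map_zsmul]; exact hz⟩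
  have hcp : ∀ x, ∃ k : ℕ, q ^ k • c x = 0 := by
    intro x
    obtain ⟨k, hk⟩ := hprim x
    exact ⟨k, by rw [← map_nsmul, hk, map_zero]⟩
  have hPK : P ⊔ c.ker = ⊤ := by
    rw [eq_top_iff]
    intro x _
    obtain ⟨z, hz, hzx⟩ := hsurj (c x) (hcp x)
    have : x = z + (x - z) := by abel
    rw [this]
    refine AddSubgroup.add_mem_sup hz ?_
    rw [AddMonoidHom.mem_ker, map_sub, hzx, sub_self]
  have hP : P = ⊤ := by
    refine (hB _ _ hPK).resolve_right fun h => hcb ?_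
    have : b ∈ c.ker := h ▸ AddSubgroup.mem_top b
    exact this
  have hinj : Function.Injective c := by
    rw [injective_iff_map_eq_zero]
    intro x hx
    have hxP : x ∈ P := hP ▸ AddSubgroup.mem_top x
    obtain ⟨n, ⟨z, hz⟩⟩ := hxP
    change z • s n = x at hz
    rw [← hz, map_zsmul, ← addOrderOf_dvd_iff_zsmul_eq_zero, hord] at hx
    obtain ⟨w, rfl⟩ := hx
    rw [← hz, mul_comm, mul_smul, natCast_zsmul, hsn1, smul_zero]
  let c1 : B →+ PruferGroup q hq := AddMonoidHom.codRestrict c (PruferGroup q hq) hcp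
  refine ⟨AddEquiv.ofBijective c1 ⟨?_, ?_⟩⟩
  · intro x y h
    exact hinj (congrArg Subtype.val h)
  · rintro ⟨y, hy⟩
    obtain ⟨x, -, hx⟩ := hsurj y hy
    exact ⟨x, Subtype.ext hx⟩

lemma grp_not_cyclic {G : Type*} [Group G] [Infinite G]
    (hB : ∀ H K : Subgroup G, H ⊔ K = ⊤ → H = ⊤ ∨ K = ⊤) (g : G) : Subgroup.zpowers g ≠ ⊤ := by
  intro hg
  have hno : ¬ IsOfFinOrder g := by
    intro h
    have : Finite (Subgroup.zpowers g) := h.finite_zpowers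
    rw [hg] at this
    have : Finite G := Finite.of_equiv _ (Subgroup.topEquiv (G := G)).toEquiv
    exact not_finite G
  have key : ∀ n : ℤ, n ∣ 1 ∨ Subgroup.zpowers (g ^ n) ≠ ⊤ := by
    intro n
    by_cases h : Subgroup.zpowers (g ^ n) = ⊤
    · left
      have : g ∈ Subgroup.zpowers (g ^ n) := h ▸ Subgroup.mem_top g
      obtain ⟨k, hk⟩ := this
      refine ⟨k, ?_⟩
      refine (injective_zpow_iff_not_isOfFinOrder.2 hno) ?_
      simpa [zpow_mul] using hk.symm
    · exact Or.inr h
  have hj : Subgroup.zpowers (g ^ (2 : ℤ)) ⊔ Subgroup.zpowers (g ^ (3 : ℤ)) = ⊤ := by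
    rw [eq_top_iff, ← hg, Subgroup.zpowers_le]
    have : (g ^ (2 : ℤ))⁻¹ * g ^ (3 : ℤ) = g := by group
    refine (congrArg (· ∈ _) this).mp ?_
    exact Subgroup.mul_mem_sup (inv_mem (Subgroup.mem_zpowers _)) (Subgroup.mem_zpowers _)
  rcases hB _ _ hj with h | h
  · exact (key 2).elim (by norm_num) (fun h' => h' h)
  · exact (key 3).elim (by norm_num) (fun h' => h' h)

lemma grp_no_finite_index {G : Type*} [Group G] [Infinite G]
    (hB : ∀ H K : Subgroup G, H ⊔ K = ⊤ → H = ⊤ ∨ K = ⊤)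
    (H : Subgroup G) (hH : H.FiniteIndex) : H = ⊤ := by
  have hfg : ∀ s : Set G, s.Finite → Subgroup.closure s ≠ ⊤ := by
    intro s hs
    induction s, hs using Set.Finite.induction_on with
    | empty => rw [Subgroup.closure_empty]; exact bot_ne_top
    | @insert a s _ _ ih =>
      intro h
      rw [Set.insert_eq, Subgroup.closure_union, ← Subgroup.zpowers_eq_closure] at h
      exact (hB _ _ h).elim (grp_not_cyclic hB a) ih
  have : Finite (G ⧸ H) := Subgroup.finite_quotient_of_finiteIndex
  let s : Set G := Set.range (Quotient.out : G ⧸ H → G)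
  refine (hB H (Subgroup.closure s) ?_).resolve_right (hfg s (Set.finite_range _))
  rw [eq_top_iff]
  intro x _
  let t : G := (Quotient.out (QuotientGroup.mk x : G ⧸ H))
  have h1 : t⁻¹ * x ∈ H := by
    rw [← QuotientGroup.eq]
    exact QuotientGroup.out_eq' _
  have : x = t * (t⁻¹ * x) := by group
  rw [this]
  exact mul_mem ((le_sup_right : Subgroup.closure s ≤ _) (Subgroup.subset_closure ⟨_, rfl⟩))
    ((le_sup_left : H ≤ _) h1)

/-- Lemma 2.2 (finiteness version): if `G` is infinite, `G ≠ G'`, `A/C_A(G)` is an infinite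
`R`-module but `A/C_A(H)` is a finite `R`-module for every proper subgroup `H`, then `G` has
no proper subgroups of finite index and `G/G'` is a quasi-cyclic `q`-group for some prime `q`. -/
theorem finite_proper_subgroups (R : Type*) [Ring R] (G : Type*) [Group G] [Infinite G]
    (A : Type*) [AddCommGroup A] [Module R A] [DistribMulAction G A] [SMulCommClass G R A]
    (hG' : commutator G ≠ ⊤)
    (hG : Infinite (A ⧸ moduleCentralizer R A (⊤ : Subgroup G)))
    (hH : ∀ H : Subgroup G, H ≠ ⊤ → Finite (A ⧸ moduleCentralizer R A H)) :
    (∀ H : Subgroup G, H.FiniteIndex → H = ⊤) ∧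
    ∃ (q : ℕ) (hq : q.Prime),
      Nonempty (Abelianization G ≃* Multiplicative (PruferGroup q hq)) := by
  have hB : ∀ H K : Subgroup G, H ⊔ K = ⊤ → H = ⊤ ∨ K = ⊤ := by
    intro H K hHK
    by_contra hcon
    rw [not_or] at hcon
    have h1 := hH H hcon.1
    have h2 := hH K hcon.2
    have hle : moduleCentralizer R A H ⊓ moduleCentralizer R A K ≤
        moduleCentralizer R A (⊤ : Subgroup G) := by
      rintro a ⟨ha, hb⟩ g _
      have hg : g ∈ H ⊔ K := hHK ▸ Subgroup.mem_top g
      have : H ⊔ K ≤ MulAction.stabilizer G a :=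
        sup_le (fun g hg => ha g hg) (fun g hg => hb g hg)
      exact this hg
    let f : A →ₗ[R] (A ⧸ moduleCentralizer R A H) × (A ⧸ moduleCentralizer R A K) :=
      (Submodule.mkQ _).prod (Submodule.mkQ _)
    have hker : LinearMap.ker f ≤ moduleCentralizer R A (⊤ : Subgroup G) := by
      refine le_trans ?_ hle
      intro a ha
      simpa [f] using ha
    have hf : Finite (A ⧸ LinearMap.ker f) :=
      Finite.of_equiv _ f.quotKerEquivRange.symm.toEquiv
    have : Finite (A ⧸ moduleCentralizer R A (⊤ : Subgroup G)) :=
      Finite.of_surjective _ (Submodule.factor_surjective hker)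
    exact not_finite (A ⧸ moduleCentralizer R A (⊤ : Subgroup G))
  have hF := grp_no_finite_index hB
  refine ⟨hF, ?_⟩
  let π : G →* Abelianization G := Abelianization.of
  have hπ : Function.Surjective π := QuotientGroup.mk_surjective
  have hB' : ∀ H K : Subgroup (Abelianization G), H ⊔ K = ⊤ → H = ⊤ ∨ K = ⊤ := by
    intro H K h
    have h2 : H.comap π ⊔ K.comap π = ⊤ := by
      rw [Subgroup.comap_sup_eq _ _ _ hπ, h, Subgroup.comap_top]
    refine (hB _ _ h2).imp ?_ ?_ <;>
    · intro h
      rw [← Subgroup.comap_top π] at h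
      exact Subgroup.comap_injective hπ h
  have hF' : ∀ H : Subgroup (Abelianization G), H.FiniteIndex → H = ⊤ := by
    intro H hfi
    have h : H.comap π = ⊤ := hF _ ⟨by rw [Subgroup.index_comap_of_surjective _ hπ]; exact hfi.index_ne_zero⟩
    rw [← Subgroup.comap_top π] at h
    exact Subgroup.comap_injective hπ h
  have hnt : Nontrivial (Abelianization G) := by
    by_contra hn
    rw [not_nontrivial_iff_subsingleton] at hn
    apply hG'
    rw [eq_top_iff]
    intro g _
    exact (QuotientGroup.eq_one_iff g).1 (Subsingleton.elim (π g) 1)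
  have h1 : HolProp (Additive (Abelianization G)) := by
    intro H K h
    have := hB' (AddSubgroup.toSubgroup' H) (AddSubgroup.toSubgroup' K)
      (by rw [← map_sup, h, map_top])
    simpa using this
  have h2 : ∀ H : AddSubgroup (Additive (Abelianization G)), H.FiniteIndex → H = ⊤ := by
    intro H hfi
    have := hF' (AddSubgroup.toSubgroup' H) ⟨hfi.index_ne_zero⟩
    simpa using this
  obtain ⟨q, hq, ⟨e⟩⟩ := hol_prufer h1 h2
  exact ⟨q, hq, ⟨AddEquiv.toMultiplicativeRight e⟩⟩
end

section
/- Let p be a prime and let A be an Artinian module over the ring ℤ_p of p-adic integers. Then the additive group of A is a Chernikov group and its divisible part is a p-group. -/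
/-- An additive subgroup `D` of an abelian group is divisible if every element of `D` is
divisible within `D` by every positive natural number. -/
def AddSubgroup.IsDivisible {A : Type*} [AddCommGroup A] (D : AddSubgroup A) : Prop :=
  ∀ a ∈ D, ∀ n : ℕ, 0 < n → ∃ b ∈ D, n • b = a

/-- A Chernikov (abelian) group: it possesses a divisible subgroup of finite index which is
a direct sum of finitely many quasi-cyclic (Prüfer) groups. -/
def IsChernikov (A : Type*) [AddCommGroup A] : Prop :=
  ∃ D : AddSubgroup A, D.FiniteIndex ∧ D.IsDivisible ∧
    ∃ (n : ℕ) (q : Fin n → ℕ) (hq : ∀ i, (q i).Prime),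
      Nonempty (D ≃+ ∀ i : Fin n, PruferGroup (q i) (hq i))

/-- The divisible part of an abelian group: its maximal divisible subgroup, i.e. the
subgroup generated by all divisible subgroups. -/
def divisiblePart (A : Type*) [AddCommGroup A] : AddSubgroup A :=
  sSup {D : AddSubgroup A | D.IsDivisible}

theorem aux_divisible {G : Type*} [AddCommGroup G] {p : ℕ} (hp : p.Prime)
    (ht : ∀ x : G, ∃ k : ℕ, p ^ k • x = 0) (hd : ∀ x : G, ∃ y, p • y = x)
    (n : ℕ) (hn : n ≠ 0) (x : G) : ∃ y, n • y = x := by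
  have hd' : ∀ (k : ℕ) (x : G), ∃ y, p ^ k • y = x := by
    intro k
    induction k with
    | zero => intro x; exact ⟨x, by simp⟩
    | succ k ih =>
      intro x
      obtain ⟨y, rfl⟩ := hd x
      obtain ⟨z, rfl⟩ := ih y
      exact ⟨z, by rw [pow_succ, mul_comm, mul_nsmul']⟩
  obtain ⟨a, m, hm, rfl⟩ := Nat.exists_eq_pow_mul_and_not_dvd hn p hp.ne_one
  obtain ⟨y, rfl⟩ := hd' a x
  obtain ⟨k, hk⟩ := ht y
  have hc : IsCoprime (m : ℤ) ((p ^ k : ℕ) : ℤ) :=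
    Nat.isCoprime_iff_coprime.2 (Nat.Coprime.pow_right k ((hp.coprime_iff_not_dvd.2 hm).symm))
  obtain ⟨u, v, huv⟩ := hc
  refine ⟨u • y, ?_⟩
  rw [mul_nsmul']
  congr 1
  have h1 : (u * (m : ℤ) + v * ((p ^ k : ℕ) : ℤ)) • y = y := by rw [huv, one_smul]
  rw [add_smul, mul_smul, mul_smul, natCast_zsmul, natCast_zsmul, hk, smul_zero, add_zero] at h1
  rw [smul_comm]
  exact h1

theorem aux_iso {G H V : Type*} [AddCommGroup G] [AddCommGroup H] [AddCommGroup V]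
    {p : ℕ} (hp : p.Prime)
    (htG : ∀ x : G, ∃ k : ℕ, p ^ k • x = 0) (hdG : ∀ x : G, ∃ y, p • y = x)
    (htH : ∀ x : H, ∃ k : ℕ, p ^ k • x = 0) (hdH : ∀ x : H, ∃ y, p • y = x)
    (i : V →+ G) (hi : Function.Injective i) (hir : ∀ x : G, p • x = 0 → ∃ v, i v = x)
    (j : V →+ H) (hj : Function.Injective j) (hjr : ∀ x : H, p • x = 0 → ∃ v, j v = x) :
    Nonempty (G ≃+ H) := by
  let : DivisibleBy H ℤ := divisibleByOfSMulRightSurj H ℤ (by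
    intro n hn x
    obtain ⟨y, hy⟩ := aux_divisible hp htH hdH n.natAbs (by simpa using hn) x
    rcases Int.natAbs_eq n with h | h
    · exact ⟨y, by
        show n • y = x
        rw [h, natCast_zsmul, hy]⟩
    · exact ⟨-y, by
        show n • (-y) = x
        rw [h, neg_smul, smul_neg, neg_neg, natCast_zsmul, hy]⟩)
  obtain ⟨f, hf⟩ := (Module.Baer.of_divisible H).extension_property_addMonoidHom i hi j
  have hfi : ∀ v, f (i v) = j v := fun v => DFunLike.congr_fun hf v
  have key : ∀ (k : ℕ) (x : G), p ^ k • x = 0 → f x = 0 → x = 0 := by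
    intro k
    induction k with
    | zero => intro x hx _; simpa using hx
    | succ k ih =>
      intro x hx hfx
      apply ih x _ hfx
      obtain ⟨v, hv⟩ := hir (p ^ k • x) (by rw [← mul_nsmul', ← pow_succ', hx])
      have : j v = 0 := by rw [← hfi, hv, map_nsmul, hfx, smul_zero]
      have hv0 : v = 0 := hj (by rw [this, map_zero])
      rw [← hv, hv0, map_zero]
  have hdG' : ∀ (k : ℕ) (x : G), ∃ y, p ^ k • y = x := fun k x =>
    aux_divisible hp htG hdG (p ^ k) (pow_ne_zero _ hp.ne_zero) x
  have key2 : ∀ (k : ℕ) (x : H), p ^ k • x = 0 → ∃ y, f y = x := by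
    intro k
    induction k with
    | zero => intro x hx; exact ⟨0, by simpa using hx.symm⟩
    | succ k ih =>
      intro x hx
      obtain ⟨v, hv⟩ := hjr (p ^ k • x) (by rw [← mul_nsmul', ← pow_succ', hx])
      obtain ⟨d, hd⟩ := hdG' k (i v)
      obtain ⟨y, hy⟩ := ih (x - f d) (by
        rw [smul_sub, ← map_nsmul, hd, hfi, hv, sub_self])
      exact ⟨y + d, by rw [map_add, hy, sub_add_cancel]⟩
  refine ⟨AddEquiv.ofBijective f ⟨?_, ?_⟩⟩
  · rw [injective_iff_map_eq_zero]
    intro x hx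
    obtain ⟨k, hk⟩ := htG x
    exact key k x hk hx
  · intro x
    obtain ⟨k, hk⟩ := htH x
    exact key2 k x hk

theorem aux_prufer_tors (p : ℕ) (hp : p.Prime) (x : PruferGroup p hp) :
    ∃ k : ℕ, p ^ k • x = 0 := by
  obtain ⟨x, k, hk⟩ := x
  exact ⟨k, Subtype.ext hk⟩

theorem aux_prufer_div (p : ℕ) (hp : p.Prime) (x : PruferGroup p hp) :
    ∃ y : PruferGroup p hp, p • y = x := by
  obtain ⟨x, k, hk⟩ := x
  obtain ⟨q, rfl⟩ := QuotientAddGroup.mk_surjective x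
  have hp0 : (p : ℚ) ≠ 0 := by exact_mod_cast hp.ne_zero
  have h : p • ((q / p : ℚ) : ℚ ⧸ AddSubgroup.zmultiples (1 : ℚ)) = (q : ℚ) := by
    rw [← QuotientAddGroup.mk_nsmul, nsmul_eq_mul, mul_div_cancel₀ _ hp0]
  refine ⟨⟨((q / p : ℚ) : ℚ ⧸ AddSubgroup.zmultiples (1 : ℚ)), k + 1, ?_⟩, Subtype.ext h⟩
  rw [pow_succ, mul_nsmul', h]
  exact hk

theorem aux_prufer_socle (p : ℕ) (hp : p.Prime) :
    ∃ j : ZMod p →+ PruferGroup p hp, Function.Injective j ∧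
      ∀ x : PruferGroup p hp, p • x = 0 → ∃ v, j v = x := by
  have hp0 : (p : ℚ) ≠ 0 := by exact_mod_cast hp.ne_zero
  have h : p • ((1 / p : ℚ) : ℚ ⧸ AddSubgroup.zmultiples (1 : ℚ)) = 0 := by
    rw [← QuotientAddGroup.mk_nsmul, nsmul_eq_mul, mul_div_cancel₀ _ hp0,
      QuotientAddGroup.eq_zero_iff]
    exact AddSubgroup.mem_zmultiples 1
  let g : PruferGroup p hp := ⟨((1 / p : ℚ) : ℚ ⧸ AddSubgroup.zmultiples (1 : ℚ)), 1, by
    rw [pow_one]; exact h⟩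
  have hg : p • g = 0 := Subtype.ext h
  refine ⟨ZMod.lift p ⟨zmultiplesHom _ g, by simpa using hg⟩, ?_, ?_⟩
  · rw [ZMod.lift_injective]
    intro m hm
    have hm' : m • g = 0 := by simpa using hm
    have h2 : m • ((1 / p : ℚ) : ℚ ⧸ AddSubgroup.zmultiples (1 : ℚ)) = 0 :=
      congrArg Subtype.val hm'
    rw [← QuotientAddGroup.mk_zsmul, QuotientAddGroup.eq_zero_iff,
      AddSubgroup.mem_zmultiples_iff] at h2
    obtain ⟨k, hk⟩ := h2
    rw [ZMod.intCast_zmod_eq_zero_iff_dvd] 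
    refine ⟨k, ?_⟩
    simp only [zsmul_eq_mul] at hk
    field_simp at hk
    have : ((m : ℤ) : ℚ) = ((p * k : ℤ) : ℚ) := by push_cast; linarith
    exact_mod_cast this
  · rintro ⟨x, hx⟩ hx0
    have hx1 : p • x = 0 := congrArg Subtype.val hx0
    obtain ⟨q, rfl⟩ := QuotientAddGroup.mk_surjective x
    have h2 := hx1
    rw [← QuotientAddGroup.mk_nsmul, QuotientAddGroup.eq_zero_iff,
      AddSubgroup.mem_zmultiples_iff] at h2
    obtain ⟨k, hk⟩ := h2
    refine ⟨(k : ZMod p), ?_⟩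
    rw [ZMod.lift_coe]
    apply Subtype.ext
    show k • ((1 / p : ℚ) : ℚ ⧸ AddSubgroup.zmultiples (1 : ℚ)) = (q : ℚ)
    rw [← QuotientAddGroup.mk_zsmul]
    congr 1
    simp only [zsmul_eq_mul, nsmul_eq_mul] at hk ⊢
    field_simp
    linarith

theorem aux_finite (p : ℕ) [Fact p.Prime] (M : Type*) [AddCommGroup M] [Module ℤ_[p] M]
    [IsArtinian ℤ_[p] M] (N : ℕ) (h : ∀ x : M, (p : ℤ_[p]) ^ N • x = 0) : Finite M := by
  let I : Ideal ℤ_[p] := Ideal.span {(p : ℤ_[p]) ^ N}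
  have hI : Module.IsTorsionBySet ℤ_[p] M I := by
    exact (Module.isTorsionBySet_span_singleton_iff _).2 (fun x => h x)
  let : Module (ℤ_[p] ⧸ I) M := hI.module
  have : IsScalarTower ℤ_[p] (ℤ_[p] ⧸ I) M := hI.isScalarTower
  haveI : IsArtinian (ℤ_[p] ⧸ I) M := isArtinian_of_tower ℤ_[p] inferInstance
  haveI : NeZero (p ^ N) := ⟨pow_ne_zero _ (Fact.out : p.Prime).ne_zero⟩
  haveI : Finite (ℤ_[p] ⧸ I) := by
    have e : I = RingHom.ker (PadicInt.toZModPow (p := p) N) :=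
      (PadicInt.ker_toZModPow N).symm
    rw [e]
    exact Finite.of_injective _ (RingHom.kerLift_injective (PadicInt.toZModPow (p := p) N))
  haveI : IsNoetherian (ℤ_[p] ⧸ I) M :=
    IsSemiprimaryRing.isNoetherian_iff_isArtinian.2 inferInstance
  exact Module.finite_of_finite (ℤ_[p] ⧸ I)

theorem aux_tors (p : ℕ) [Fact p.Prime] (M : Type*) [AddCommGroup M] [Module ℤ_[p] M]
    [IsArtinian ℤ_[p] M] (x : M) : ∃ k : ℕ, p ^ k • x = 0 := by
  obtain ⟨n, ⟨y, hy⟩, h⟩ := IsArtinian.exists_pow_succ_smul_dvd (p : ℤ_[p])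
    (⟨x, Submodule.mem_span_singleton_self x⟩ : Submodule.span ℤ_[p] {x})
  obtain ⟨c, rfl⟩ := Submodule.mem_span_singleton.1 hy
  have h' : (p : ℤ_[p]) ^ (n + 1) • c • x = (p : ℤ_[p]) ^ n • x := congrArg Subtype.val h
  have hu : IsUnit (1 - (p : ℤ_[p]) * c) := by
    apply IsLocalRing.isUnit_one_sub_self_of_mem_nonunits
    rw [PadicInt.mem_nonunits, norm_mul]
    exact lt_of_le_of_lt (mul_le_of_le_one_right (norm_nonneg _) c.norm_le_one)
      (by rw [PadicInt.norm_p]; exact inv_lt_one_of_one_lt₀ (by exact_mod_cast (Fact.out : p.Prime).one_lt))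
  refine ⟨n, ?_⟩
  have h2 : (1 - (p : ℤ_[p]) * c) • ((p : ℤ_[p]) ^ n • x) = 0 := by
    rw [smul_smul] at h' ⊢
    rw [show (1 - (p : ℤ_[p]) * c) * p ^ n = p ^ n - p ^ (n + 1) * c by ring, sub_smul, h', sub_self]
  rw [hu.smul_eq_zero] at h2
  rw [← Nat.cast_smul_eq_nsmul ℤ_[p]]
  simpa using h2

theorem aux_elem0 (p : ℕ) [Fact p.Prime] (T : Type*) [AddCommGroup T] [Finite T]
    [Module (ZMod p) T] : ∃ r : ℕ, Nonempty (T ≃+ (Fin r → ZMod p)) := by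
  have : Module.Finite (ZMod p) T := Module.Finite.of_finite
  exact ⟨_, ⟨(Module.finBasis (ZMod p) T).equivFun.toAddEquiv⟩⟩

theorem aux_elem (p : ℕ) [Fact p.Prime] (T : Type*) [AddCommGroup T] [Finite T]
    (h : ∀ x : T, p • x = 0) : ∃ r : ℕ, Nonempty (T ≃+ (Fin r → ZMod p)) :=
  @aux_elem0 p _ T _ _ (AddCommGroup.zmodModule h)

theorem artinian_padicInt_module_chernikov (p : ℕ) [Fact p.Prime]
    (A : Type*) [AddCommGroup A] [Module ℤ_[p] A] [IsArtinian ℤ_[p] A] :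
    IsChernikov A ∧ ∀ a ∈ divisiblePart A, ∃ n : ℕ, p ^ n • a = 0 := by
  have hp : p.Prime := Fact.out
  refine ⟨?_, fun a _ => aux_tors p A a⟩
  obtain ⟨N, hN⟩ := IsArtinian.range_smul_pow_stabilizes A (p : ℤ_[p])
  let D : Submodule ℤ_[p] A := LinearMap.range ((p : ℤ_[p]) ^ N • LinearMap.id : A →ₗ[ℤ_[p]] A)
  have hDd : ∀ x : D, ∃ y : D, p • y = x := by
    rintro ⟨x, hx⟩
    have hx' := hx
    simp only [D] at hx'
    rw [hN (N + 1) (Nat.le_succ N)] at hx'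
    obtain ⟨y, hy⟩ := hx'
    refine ⟨⟨(p : ℤ_[p]) ^ N • y, ⟨y, rfl⟩⟩, Subtype.ext ?_⟩
    show p • ((p : ℤ_[p]) ^ N • y) = x
    rw [← hy, ← Nat.cast_smul_eq_nsmul ℤ_[p], smul_smul, ← pow_succ']
    rfl
  have hDt : ∀ x : D, ∃ k : ℕ, p ^ k • x = 0 := aux_tors p D
  have hfin : Finite (A ⧸ D) := by
    apply aux_finite p _ N
    intro x
    obtain ⟨a, rfl⟩ := Submodule.Quotient.mk_surjective _ x
    rw [← Submodule.Quotient.mk_smul, Submodule.Quotient.mk_eq_zero]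
    exact ⟨a, rfl⟩
  let T := Submodule.torsionBy ℤ_[p] D (p : ℤ_[p])
  have hTfin : Finite T := by
    apply aux_finite p _ 1
    rintro ⟨x, hx⟩
    rw [Submodule.mem_torsionBy_iff] at hx
    rw [pow_one]
    exact Subtype.ext hx
  have hTp : ∀ x : T, p • x = 0 := by
    rintro ⟨x, hx⟩
    rw [Submodule.mem_torsionBy_iff] at hx
    rw [← Nat.cast_smul_eq_nsmul ℤ_[p]]
    exact Subtype.ext hx
  obtain ⟨r, ⟨e⟩⟩ := aux_elem p T hTp
  obtain ⟨j, hj, hjr⟩ := aux_prufer_socle p hp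
  refine ⟨D.toAddSubgroup, ?_, ?_, r, fun _ => p, fun _ => hp, ?_⟩
  · haveI : Finite (A ⧸ D.toAddSubgroup) := hfin
    exact AddSubgroup.finiteIndex_of_finite_quotient
  · intro a ha n hn
    obtain ⟨y, hy⟩ := aux_divisible hp hDt hDd n hn.ne' ⟨a, ha⟩
    exact ⟨y, y.2, congrArg Subtype.val hy⟩
  · refine aux_iso (G := D) (V := T) hp hDt hDd ?_ ?_ T.subtype.toAddMonoidHom
      Subtype.val_injective ?_
      ((AddMonoidHom.compLeft j (Fin r)).comp e.toAddMonoidHom) ?_ ?_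
    · intro x
      choose k hk using fun i => aux_prufer_tors p hp (x i)
      refine ⟨∑ i, k i, funext fun i => ?_⟩
      have : k i ≤ ∑ i, k i := Finset.single_le_sum (fun _ _ => Nat.zero_le _) (Finset.mem_univ i)
      obtain ⟨c, hc⟩ := Nat.exists_eq_add_of_le this
      show p ^ (∑ i, k i) • x i = 0
      rw [hc, pow_add, mul_nsmul, hk, smul_zero]
    · intro x
      choose y hy using fun i => aux_prufer_div p hp (x i)
      exact ⟨y, funext hy⟩
    · intro x hx
      refine ⟨⟨x, ?_⟩, rfl⟩
      rw [Submodule.mem_torsionBy_iff, Nat.cast_smul_eq_nsmul]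
      exact hx
    · intro a b hab
      apply e.injective
      funext i
      exact hj (congrFun hab i)
    · intro x hx
      choose v hv using fun i => hjr (x i) (congrFun hx i)
      refine ⟨e.symm v, funext fun i => ?_⟩
      show j (e (e.symm v) i) = x i
      rw [e.apply_symm_apply, hv]
end

section
/- Let G be an infinite group with G ≠ G' (G is not equal to its derived subgroup) and let A be a ℤG-module with C_G(A) = 1, where ℤ is the ring of integers. If A/C_A(G) is not an Artinian ℤ-module and A/C_A(H) is an Artinian ℤ-module for every proper subgroup H of G, then G is isomorphic to a quasi-cyclic q-group C_{q^∞} for some prime q. -/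
theorem aux_baer {B : Type*} [AddCommGroup B] (h : ∀ n : ℤ, n ≠ 0 → ∀ b : B, ∃ c : B, n • c = b) :
    Module.Baer ℤ B := by
  have : DivisibleBy B ℤ := divisibleByOfSMulRightSurj B ℤ (fun {n} hn b => h n hn b)
  exact Module.Baer.of_divisible B

theorem aux_mem_prufer {q : ℕ} (hq : q.Prime) (v : ℚ ⧸ AddSubgroup.zmultiples (1 : ℚ)) :
    v ∈ PruferGroup q hq ↔ ∃ k : ℕ, q ^ k • v = 0 := Iff.rfl

theorem aux_QZ_div (n : ℤ) (hn : n ≠ 0) (b : ℚ ⧸ AddSubgroup.zmultiples (1 : ℚ)) :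
    ∃ c : ℚ ⧸ AddSubgroup.zmultiples (1 : ℚ), n • c = b := by
  induction b using QuotientAddGroup.induction_on with
  | H r =>
    refine ⟨((r / n : ℚ) : ℚ ⧸ AddSubgroup.zmultiples (1 : ℚ)), ?_⟩
    rw [← QuotientAddGroup.mk_zsmul]
    congr 1
    have : (n : ℚ) ≠ 0 := by exact_mod_cast hn
    simp only [zsmul_eq_mul]
    field_simp

theorem aux_prufer_div_s7 {q : ℕ} (hq : q.Prime) (n : ℤ) (hn : n ≠ 0) (b : PruferGroup q hq) :
    ∃ c : PruferGroup q hq, n • c = b := by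
  obtain ⟨b, hb⟩ := b
  obtain ⟨k, hk⟩ := hb
  obtain ⟨v, hv⟩ := aux_QZ_div n hn b
  have hf : FiniteMultiplicity (q : ℤ) n := by
    rw [Int.finiteMultiplicity_iff]
    exact ⟨by simpa using hq.ne_one, hn⟩
  obtain ⟨m, hm, hqm⟩ := hf.exists_eq_pow_mul_and_not_dvd
  set e := multiplicity (q : ℤ) n
  have hcop : IsCoprime m ((q : ℤ) ^ k) := by
    apply IsCoprime.pow_right
    exact ((Nat.prime_iff_prime_int.mp hq).coprime_iff_not_dvd.mpr hqm).symm
  obtain ⟨c, d, hcd⟩ := hcop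
  have hk' : ((q : ℤ) ^ k) • b = 0 := by
    rw [← hk, ← natCast_zsmul]; push_cast; rfl
  refine ⟨⟨(c * m) • v, k + e, ?_⟩, Subtype.ext ?_⟩
  · rw [← natCast_zsmul, smul_smul]
    push_cast
    have : (q : ℤ) ^ (k + e) * (c * m) = c * q ^ k * n := by rw [hm]; ring
    rw [this, mul_smul, mul_smul, hv, hk', smul_zero]
  · change n • ((c * m) • v) = b
    rw [smul_comm, hv]
    have : c * m = 1 - d * q ^ k := by linarith
    rw [this, sub_smul, one_smul, mul_smul, hk', smul_zero, sub_zero]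

theorem aux_prufer_iso {B : Type*} [AddCommGroup B]
    (hdiv : ∀ n : ℤ, n ≠ 0 → ∀ b : B, ∃ c : B, n • c = b)
    (hol : ∀ H K : AddSubgroup B, H ⊔ K = ⊤ → H = ⊤ ∨ K = ⊤)
    {q : ℕ} (hq : q.Prime) (x : B) (hx : addOrderOf x = q) :
    Nonempty (PruferGroup q hq ≃+ B) := by
  have hq0 : (q : ℚ) ≠ 0 := by exact_mod_cast hq.ne_zero
  let i : ℤ →+ ℚ := zmultiplesHom ℚ (1 / q : ℚ)
  have hi : Function.Injective i := by
    intro a b hab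
    simp only [i, zmultiplesHom_apply, zsmul_eq_mul] at hab
    field_simp at hab
    exact_mod_cast hab
  obtain ⟨F, hF⟩ := (aux_baer hdiv).extension_property_addMonoidHom i hi (zmultiplesHom B x)
  have hF' : ∀ m : ℤ, F (m / q) = m • x := by
    intro m
    have := DFunLike.congr_fun hF m
    simp only [i, AddMonoidHom.comp_apply, zmultiplesHom_apply, zsmul_eq_mul] at this
    rw [← this]; congr 1; ring
  have hF1 : F 1 = 0 := by
    have := hF' q
    rw [Int.cast_natCast, div_self hq0, natCast_zsmul, ← hx, addOrderOf_nsmul_eq_zero] at this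
    exact this
  let F' : ℚ ⧸ AddSubgroup.zmultiples (1 : ℚ) →+ B := QuotientAddGroup.lift _ F (by
    rw [AddSubgroup.zmultiples_le]; exact hF1)
  have key : ∀ (k : ℕ) (v : ℚ ⧸ AddSubgroup.zmultiples (1 : ℚ)), q ^ k • v = 0 → F' v = 0 → v = 0 := by
    intro k
    induction k with
    | zero => intro v hv _; simpa using hv
    | succ k ih =>
      intro v hv hv0
      have h1 : q • v = 0 := by
        apply ih
        · rw [smul_smul, ← pow_succ, hv]
        · rw [map_nsmul, hv0, smul_zero]
      induction v using QuotientAddGroup.induction_on with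
      | H r =>
        rw [← QuotientAddGroup.mk_nsmul, QuotientAddGroup.eq_zero_iff, AddSubgroup.mem_zmultiples_iff] at h1
        obtain ⟨m, hm⟩ := h1
        simp only [zsmul_eq_mul, mul_one, nsmul_eq_mul] at hm
        have hr : r = m / q := by rw [hm]; field_simp
        have h2 : F r = 0 := hv0
        rw [hr, hF', ← addOrderOf_dvd_iff_zsmul_eq_zero, hx] at h2
        obtain ⟨t, rfl⟩ := h2
        rw [QuotientAddGroup.eq_zero_iff, AddSubgroup.mem_zmultiples_iff]
        refine ⟨t, ?_⟩
        rw [hr]; push_cast; simp only [zsmul_eq_mul, mul_one]; field_simp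
  let f : PruferGroup q hq →+ B := F'.comp (PruferGroup q hq).subtype
  have hf : Function.Injective f := by
    rw [injective_iff_map_eq_zero]
    rintro ⟨v, k, hk⟩ hv
    exact Subtype.ext (key k v hk hv)
  obtain ⟨r, hr⟩ := (aux_baer (aux_prufer_div_s7 hq)).extension_property_addMonoidHom f hf (AddMonoidHom.id _)
  have hr' : ∀ p, r (f p) = p := fun p => DFunLike.congr_fun hr p
  have hsup : f.range ⊔ r.ker = ⊤ := by
    rw [eq_top_iff]
    intro a _
    rw [AddSubgroup.mem_sup]
    refine ⟨f (r a), ⟨_, rfl⟩, a - f (r a), ?_, by abel⟩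
    rw [AddMonoidHom.mem_ker, map_sub, hr', sub_self]
  rcases hol _ _ hsup with h | h
  · exact ⟨AddEquiv.ofBijective f ⟨hf, AddMonoidHom.range_eq_top.mp h⟩⟩
  · exfalso
    have hu : q ^ 1 • (((1 / q : ℚ)) : ℚ ⧸ AddSubgroup.zmultiples (1 : ℚ)) = 0 := by
      rw [← QuotientAddGroup.mk_nsmul, QuotientAddGroup.eq_zero_iff, AddSubgroup.mem_zmultiples_iff]
      refine ⟨1, ?_⟩
      simp [hq0]
    let u : PruferGroup q hq := ⟨_, 1, hu⟩
    have h1 : u = 0 := by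
      rw [← hr' u]
      have : f u ∈ r.ker := by rw [h]; trivial
      exact this
    have h2 : F (1 / q) = f u := rfl
    have h3 := hF' 1
    rw [Int.cast_one, h2, h1, map_zero, one_smul] at h3
    rw [← h3, addOrderOf_zero] at hx
    exact hq.one_lt.ne hx

theorem aux_main_ab {B : Type*} [AddCommGroup B] [Nontrivial B]
    (hdiv : ∀ n : ℤ, n ≠ 0 → ∀ b : B, ∃ c : B, n • c = b)
    (hol : ∀ H K : AddSubgroup B, H ⊔ K = ⊤ → H = ⊤ ∨ K = ⊤) :
    ∃ (q : ℕ) (hq : q.Prime), Nonempty (PruferGroup q hq ≃+ B) := by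
  obtain ⟨x, hx⟩ := exists_ne (0 : B)
  by_cases h0 : addOrderOf x = 0
  · exfalso
    let Z := AddSubgroup.zmultiples (6 • x)
    have hd : ∀ n : ℤ, n ≠ 0 → ∀ b : B ⧸ Z, ∃ c : B ⧸ Z, n • c = b := by
      intro n hn b
      induction b using QuotientAddGroup.induction_on with
      | H b =>
        obtain ⟨c, rfl⟩ := hdiv n hn b
        exact ⟨c, rfl⟩
    have hs : Function.Surjective (QuotientAddGroup.mk' Z) := QuotientAddGroup.mk'_surjective Z
    have hl : ∀ H K : AddSubgroup (B ⧸ Z), H ⊔ K = ⊤ → H = ⊤ ∨ K = ⊤ := by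
      intro H K hHK
      have := hol (H.comap (QuotientAddGroup.mk' Z)) (K.comap (QuotientAddGroup.mk' Z)) (by
        rw [AddSubgroup.comap_sup_eq _ _ _ hs, hHK, AddSubgroup.comap_top])
      refine this.imp (fun h => ?_) (fun h => ?_)
      · rw [← AddSubgroup.map_comap_eq_self_of_surjective hs H, h, AddSubgroup.map_top_of_surjective _ hs]
      · rw [← AddSubgroup.map_comap_eq_self_of_surjective hs K, h, AddSubgroup.map_top_of_surjective _ hs]
    have hz : ∀ n : ℕ, n • (x : B ⧸ Z) = 0 → 6 ∣ n := by
      intro n hn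
      rw [← QuotientAddGroup.mk_nsmul, QuotientAddGroup.eq_zero_iff, AddSubgroup.mem_zmultiples_iff] at hn
      obtain ⟨t, ht⟩ := hn
      have : (t * 6 - n : ℤ) • x = 0 := by
        rw [sub_smul, mul_smul, natCast_zsmul, ← ht, sub_eq_zero]; congr 1
        exact (natCast_zsmul x 6)
      rw [← addOrderOf_dvd_iff_zsmul_eq_zero, h0] at this
      simp at this
      omega
    have h6 : 6 • (x : B ⧸ Z) = 0 := by
      rw [← QuotientAddGroup.mk_nsmul, QuotientAddGroup.eq_zero_iff]
      exact AddSubgroup.mem_zmultiples _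
    have : Fact (Nat.Prime 2) := ⟨Nat.prime_two⟩
    have : Fact (Nat.Prime 3) := ⟨Nat.prime_three⟩
    have o2 : addOrderOf (3 • (x : B ⧸ Z)) = 2 := by
      apply addOrderOf_eq_prime
      · rw [smul_smul]; exact h6
      · intro h; have := hz 3 h; omega
    obtain ⟨e⟩ := aux_prufer_iso hd hl Nat.prime_two _ o2
    obtain ⟨k, hk⟩ := (e.symm (2 • (x : B ⧸ Z))).2
    have hk2 : 2 ^ k • e.symm (2 • (x : B ⧸ Z)) = 0 := Subtype.ext hk
    rw [← map_nsmul, map_eq_zero_iff _ e.symm.injective, smul_smul] at hk2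
    have := hz _ hk2
    have h3 : 3 ∣ 2 ^ (k + 1) := by rw [pow_succ]; omega
    have := Nat.prime_three.dvd_of_dvd_pow h3
    omega
  · have h1 : addOrderOf x ≠ 1 := by simpa using hx
    obtain ⟨q, hq, hqd⟩ := Nat.exists_prime_and_dvd h1
    refine ⟨q, hq, aux_prufer_iso hdiv hol hq ((addOrderOf x / q) • x) ?_⟩
    exact addOrderOf_nsmul_addOrderOf_sub h0 hqd

theorem aux_div {B : Type*} [AddCommGroup B]
    (hfi : ∀ H : AddSubgroup B, H.FiniteIndex → H = ⊤)
    (n : ℤ) (hn : n ≠ 0) (b : B) : ∃ c : B, n • c = b := by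
  let D : AddSubgroup B := (zsmulAddGroupHom n : B →+ B).range
  by_contra hcon
  have hb : (b : B ⧸ D) ≠ 0 := by
    intro h
    rw [QuotientAddGroup.eq_zero_iff] at h
    obtain ⟨c, hc⟩ := h
    exact hcon ⟨c, hc⟩
  obtain ⟨φ, hφ⟩ := CharacterModule.exists_character_apply_ne_zero_of_ne_zero hb
  let ψ : B →+ AddCircle (1 : ℚ) := (φ : (B ⧸ D) →+ AddCircle (1 : ℚ)).comp (QuotientAddGroup.mk' D)
  have hfin : (ψ.range : Set (AddCircle (1 : ℚ))).Finite := by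
    apply (AddCircle.finite_torsion (1 : ℚ) (n := n.natAbs) (by omega)).subset
    rintro _ ⟨y, rfl⟩
    have h1 : n • ψ y = 0 := by
      rw [← map_zsmul]
      have : QuotientAddGroup.mk' D (n • y) = 0 := by
        rw [QuotientAddGroup.mk'_apply, QuotientAddGroup.eq_zero_iff]
        exact ⟨y, rfl⟩
      change φ (QuotientAddGroup.mk' D (n • y)) = 0
      rw [this, map_zero]
    change n.natAbs • ψ y = 0
    rwa [natAbs_nsmul_eq_zero]
  have : Finite ψ.range := hfin
  have := hfi ψ.ker inferInstance
  apply hφ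
  have h2 : b ∈ ψ.ker := by rw [this]; trivial
  exact h2

theorem aux_fin1 {M : Type*} [AddCommGroup M] [hM : IsArtinian ℤ M] (n : ℕ) [NeZero n]
    [Module (ZMod n) M] : Finite M := by
  have h1 : IsArtinian (ZMod n) M := isArtinian_of_tower ℤ hM
  have h2 : IsNoetherian (ZMod n) M := IsSemiprimaryRing.isNoetherian_iff_isArtinian.mpr h1
  have h3 : Module.Finite (ZMod n) M := inferInstance
  exact Module.finite_of_finite (ZMod n)

theorem aux_fin0 {M : Type*} [AddCommGroup M] [hM : IsArtinian ℤ M] (n : ℕ) (hn : n ≠ 0)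
    (h : ∀ x : M, n • x = 0) : Finite M := by
  have : NeZero n := ⟨hn⟩
  exact @aux_fin1 M _ hM n _ (AddCommGroup.zmodModule h)

theorem aux_fin {B : Type*} [AddCommGroup B] [IsArtinian ℤ B] (n : ℕ) (hn : n ≠ 0) :
    {y : B | n • y = 0}.Finite := by
  let T : Submodule ℤ B := Submodule.torsionBy ℤ B n
  have : Finite T := aux_fin0 n hn (fun x => by
    have := x.2
    rw [Submodule.mem_torsionBy_iff] at this
    apply Subtype.ext
    rw [natCast_zsmul] at this
    exact this)
  have h2 : (T : Set B).Finite := this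
  refine h2.subset (fun y hy => ?_)
  change y ∈ T
  rw [Submodule.mem_torsionBy_iff]
  rw [natCast_zsmul]
  exact hy

theorem aux_tors_s7 {B : Type*} [AddCommGroup B] [IsArtinian ℤ B] (b : B) : addOrderOf b ≠ 0 := by
  intro h
  have hinj : Function.Injective (LinearMap.toSpanSingleton ℤ B b) := by
    rw [injective_iff_map_eq_zero]
    intro m hm
    rw [LinearMap.toSpanSingleton_apply, ← addOrderOf_dvd_iff_zsmul_eq_zero, h] at hm
    simpa using hm
  have : IsArtinian ℤ ℤ := isArtinian_of_injective _ hinj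
  have : IsArtinianRing ℤ := this
  exact Int.not_isField (IsArtinianRing.isField_of_isDomain ℤ)

theorem aux_art {G : Type*} [Group G] {A : Type*} [AddCommGroup A] [DistribMulAction G A]
    (hfi : ∀ H : Subgroup G, H.FiniteIndex → H = ⊤)
    (C : Submodule ℤ A) (hC : ∀ (g : G), ∀ c ∈ C, g • c ∈ C) [IsArtinian ℤ (A ⧸ C)]
    (g : G) (a : A) : g • a - a ∈ C := by
  let L : G → (A ⧸ C →ₗ[ℤ] A ⧸ C) := fun g =>
    C.mapQ C (DistribSMul.toAddMonoidHom A g).toIntLinearMap (fun c hc => hC g c hc)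
  have hL : ∀ g a, L g (Submodule.Quotient.mk a) = Submodule.Quotient.mk (g • a) := fun g a => rfl
  letI : MulAction G (A ⧸ C) :=
    { smul := fun g b => L g b
      one_smul := fun b => by
        obtain ⟨a, rfl⟩ := Submodule.Quotient.mk_surjective C b
        change L 1 _ = _
        rw [hL, one_smul]
      mul_smul := fun g h b => by
        obtain ⟨a, rfl⟩ := Submodule.Quotient.mk_surjective C b
        change L (g * h) _ = L g (L h _)
        rw [hL, hL, hL, mul_smul] }
  have hs : ∀ (g : G) (b : A ⧸ C), g • b = L g b := fun _ _ => rfl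
  let b : A ⧸ C := Submodule.Quotient.mk a
  have hfin : (MulAction.orbit G b).Finite := by
    refine (aux_fin (addOrderOf b) (aux_tors_s7 b)).subset ?_
    rintro _ ⟨h, rfl⟩
    change addOrderOf b • L h b = 0
    rw [← map_nsmul, addOrderOf_nsmul_eq_zero, map_zero]
  have : Finite (MulAction.orbit G b) := hfin
  have : Finite (G ⧸ MulAction.stabilizer G b) :=
    Finite.of_equiv _ (MulAction.orbitEquivQuotientStabilizer G b)
  have htop := hfi (MulAction.stabilizer G b) Subgroup.finiteIndex_of_finite_quotient
  have hg : g ∈ MulAction.stabilizer G b := by rw [htop]; trivial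
  rw [MulAction.mem_stabilizer_iff, hs, hL] at hg
  exact (Submodule.Quotient.eq C).mp hg

theorem aux_hollow {G : Type*} [Group G] {A : Type*} [AddCommGroup A] [DistribMulAction G A]
    (hG : ¬ IsArtinian ℤ (A ⧸ moduleCentralizer ℤ A (⊤ : Subgroup G)))
    (hH : ∀ H : Subgroup G, H ≠ ⊤ → IsArtinian ℤ (A ⧸ moduleCentralizer ℤ A H))
    (H K : Subgroup G) (hHK : H ⊔ K = ⊤) : H = ⊤ ∨ K = ⊤ := by
  by_contra! hcon
  have := hH H hcon.1
  have := hH K hcon.2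
  apply hG
  let f : A →ₗ[ℤ] (A ⧸ moduleCentralizer ℤ A H) × (A ⧸ moduleCentralizer ℤ A K) :=
    (moduleCentralizer ℤ A H).mkQ.prod (moduleCentralizer ℤ A K).mkQ
  have hker : LinearMap.ker f = moduleCentralizer ℤ A (⊤ : Subgroup G) := by
    rw [LinearMap.ker_prod, Submodule.ker_mkQ, Submodule.ker_mkQ]
    ext a
    constructor
    · rintro ⟨h1, h2⟩
      have : (⊤ : Subgroup G) ≤ MulAction.stabilizer G a := by
        rw [← hHK]
        exact sup_le (fun g hg => h1 g hg) (fun g hg => h2 g hg)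
      exact fun g hg => this hg
    · intro h
      exact ⟨fun g _ => h g trivial, fun g _ => h g trivial⟩
  rw [← hker]
  exact isArtinian_of_injective _ (LinearMap.ker_eq_bot.mp (Submodule.ker_liftQ_eq_bot _ f le_rfl le_rfl))

theorem aux_noncyclic {G : Type*} [Group G] [Infinite G]
    (hol : ∀ H K : Subgroup G, H ⊔ K = ⊤ → H = ⊤ ∨ K = ⊤) (x : G) : Subgroup.zpowers x ≠ ⊤ := by
  intro hx
  have ho : orderOf x = 0 := by
    rw [← Nat.card_zpowers, hx, Subgroup.card_top]
    exact Nat.card_eq_zero_of_infinite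
  have key : ∀ n : ℕ, 1 < n → Subgroup.zpowers (x ^ n) ≠ ⊤ := by
    intro n hn h
    have hm : x ∈ Subgroup.zpowers (x ^ n) := by rw [h]; trivial
    obtain ⟨t, ht⟩ := hm
    have ht' : x ^ ((n : ℤ) * t - 1) = 1 := by
      rw [zpow_sub, zpow_mul, zpow_natCast, zpow_one]
      change (x ^ n) ^ t = x at ht
      rw [ht, mul_inv_cancel]
    rw [← orderOf_dvd_iff_zpow_eq_one, ho] at ht'
    have h1 : (n : ℤ) * t = 1 := by
      have := zero_dvd_iff.mp (by simpa using ht')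
      omega
    have := Int.eq_one_or_neg_one_of_mul_eq_one h1
    omega
  have hsup : Subgroup.zpowers (x ^ 2) ⊔ Subgroup.zpowers (x ^ 3) = ⊤ := by
    rw [eq_top_iff, ← hx, Subgroup.zpowers_le]
    have h2 : x ^ 2 ∈ Subgroup.zpowers (x ^ 2) ⊔ Subgroup.zpowers (x ^ 3) :=
      Subgroup.mem_sup_left (Subgroup.mem_zpowers _)
    have h3 : x ^ 3 ∈ Subgroup.zpowers (x ^ 2) ⊔ Subgroup.zpowers (x ^ 3) :=
      Subgroup.mem_sup_right (Subgroup.mem_zpowers _)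
    have := Subgroup.mul_mem _ (Subgroup.inv_mem _ h2) h3
    have e : (x ^ 2)⁻¹ * x ^ 3 = x := by group
    rwa [e] at this
  rcases hol _ _ hsup with h | h
  · exact key 2 (by norm_num) h
  · exact key 3 (by norm_num) h

theorem aux_finindex {G : Type*} [Group G] [Infinite G]
    (hol : ∀ H K : Subgroup G, H ⊔ K = ⊤ → H = ⊤ ∨ K = ⊤) (N : Subgroup G)
    (hN : N.FiniteIndex) : N = ⊤ := by
  classical
  have hfg : ∀ S : Finset G, Subgroup.closure (S : Set G) ≠ ⊤ := by
    intro S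
    induction S using Finset.induction_on with
    | empty =>
      rw [Finset.coe_empty, Subgroup.closure_empty]
      exact bot_ne_top
    | insert a S _ ih =>
      intro h
      rw [Finset.coe_insert, ← Set.singleton_union, Subgroup.closure_union,
        ← Subgroup.zpowers_eq_closure] at h
      rcases hol _ _ h with h | h
      · exact aux_noncyclic hol a h
      · exact ih h
  have : Finite (G ⧸ N) := inferInstance
  have hfin : (Set.range (fun c : G ⧸ N => c.out)).Finite := Set.finite_range _
  have hsup : Subgroup.closure (hfin.toFinset : Set G) ⊔ N = ⊤ := by
    rw [eq_top_iff]
    intro g _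
    have h1 : (g : G ⧸ N).out ∈ Subgroup.closure (hfin.toFinset : Set G) := by
      apply Subgroup.subset_closure
      simp
    have h2 : (g : G ⧸ N).out⁻¹ * g ∈ N := by
      rw [← QuotientGroup.eq]
      exact Quotient.out_eq' _
    have := Subgroup.mul_mem_sup h1 h2
    rwa [mul_inv_cancel_left] at this
  exact (hol _ _ hsup).resolve_left (hfg _)

/-- Theorem 2.1 (case `R = ℤ`): let `A` be a `ℤG`-module where `G` is an infinite group
with `G ≠ G'` acting faithfully (`C_G(A) = 1`). If `A/C_A(G)` is not an Artinian
`ℤ`-module and `A/C_A(H)` is an Artinian `ℤ`-module for every proper subgroup `H` of `G`,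
then `G` is isomorphic to a quasi-cyclic `q`-group for some prime `q`. -/
theorem artinian_int_proper_subgroups_prufer (G : Type*) [Group G] [Infinite G]
    (A : Type*) [AddCommGroup A] [DistribMulAction G A]
    (hG' : commutator G ≠ ⊤)
    (hfaith : ∀ g : G, (∀ a : A, g • a = a) → g = 1)
    (hG : ¬ IsArtinian ℤ (A ⧸ moduleCentralizer ℤ A (⊤ : Subgroup G)))
    (hH : ∀ H : Subgroup G, H ≠ ⊤ → IsArtinian ℤ (A ⧸ moduleCentralizer ℤ A H)) :
    ∃ (q : ℕ) (hq : q.Prime), Nonempty (G ≃* Multiplicative (PruferGroup q hq)) := by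
  have hol := aux_hollow hG hH
  have hfi := aux_finindex hol
  have key : ∀ (x g : G) (a : A), x • (g • a - a) = g • a - a := by
    intro x g a
    let N : Subgroup G := Subgroup.zpowers x ⊔ commutator G
    have hNt : N ≠ ⊤ := by
      intro h
      rcases hol _ _ h with h | h
      · exact aux_noncyclic hol x h
      · exact hG' h
    have hNn : N.Normal := Subgroup.Normal.of_commutator_le G (le_sup_right)
    have := hH N hNt
    have hmem := aux_art hfi (moduleCentralizer ℤ A N) (by
      intro g c hc n hn
      have h1 := hc (g⁻¹ * n * g) (by simpa using hNn.conj_mem n hn g⁻¹)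
      rw [mul_smul, mul_smul, inv_smul_eq_iff] at h1
      exact h1) g a
    exact hmem x ((le_sup_left : _ ≤ N) (Subgroup.mem_zpowers x))
  have hcomm : ∀ g h : G, g * h = h * g := by
    intro g h
    rw [← inv_mul_eq_one]
    apply hfaith
    intro a
    have h1 := key g h a
    have h2 := key h g a
    rw [smul_sub, sub_eq_iff_eq_add] at h1 h2
    rw [mul_smul, inv_smul_eq_iff, mul_smul, mul_smul, h1, h2]
    abel
  letI : CommGroup G := { ‹Group G› with mul_comm := hcomm }
  have hdiv := aux_div (B := Additive G) (by
    intro H hHf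
    have : (AddSubgroup.toSubgroup' H).FiniteIndex := ⟨hHf.index_ne_zero⟩
    have h := hfi _ this
    rw [eq_top_iff]
    intro y _
    have : y.toMul ∈ AddSubgroup.toSubgroup' H := by rw [h]; trivial
    exact this)
  have hola : ∀ H K : AddSubgroup (Additive G), H ⊔ K = ⊤ → H = ⊤ ∨ K = ⊤ := by
    intro H K hHK
    have h := hol (AddSubgroup.toSubgroup' H) (AddSubgroup.toSubgroup' K) (by
      rw [← OrderIso.map_sup, hHK, OrderIso.map_top])
    exact h.imp (fun h => AddSubgroup.toSubgroup'.injective (h.trans (OrderIso.map_top _).symm)) (fun h => AddSubgroup.toSubgroup'.injective (h.trans (OrderIso.map_top _).symm))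
  obtain ⟨q, hq, ⟨e⟩⟩ := aux_main_ab hdiv hola
  exact ⟨q, hq, ⟨(MulEquiv.refl G : G ≃* Multiplicative (Additive G)).trans
    (AddEquiv.toMultiplicative e.symm)⟩⟩
end
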